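/- arXiv:2203.01533 — 9 statements merged into one kernel-verified Lean document; each statement's English description precedes it below -/
import Mathlib

section
/- Let r ≥ 1 and let M be a real symmetric r×r matrix. Then M satisfies (Hyp) if and only if M has at most one positive eigenvalue, counted with multiplicity. -/
open Matrix

/-- A real symmetric `r × r` matrix `M` satisfies (Hyp) if for all `v, w ∈ ℝ^r` with
`⟨w, M w⟩ > 0` one has `⟨v, M w⟩² ≥ ⟨v, M v⟩ · ⟨w, M w⟩`. -/
def SatisfiesHyp {r : ℕ} (M : Matrix (Fin r) (Fin r) ℝ) : Prop :=
  ∀ v w : Fin r → ℝ, 0 < w ⬝ᵥ M.mulVec w →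
    (v ⬝ᵥ M.mulVec w) ^ 2 ≥ (v ⬝ᵥ M.mulVec v) * (w ⬝ᵥ M.mulVec w)

/-- The matrix `M` has at most one positive eigenvalue, counted with multiplicity. -/
def AtMostOnePosEigenvalue {r : ℕ} (M : Matrix (Fin r) (Fin r) ℝ) : Prop :=
  ∃ hM : M.IsHermitian,
    (Finset.univ.filter fun i => 0 < hM.eigenvalues i).card ≤ 1


lemma exists_diag {r : ℕ} (M : Matrix (Fin r) (Fin r) ℝ) (h : M.IsHermitian) :
    ∃ U : Matrix (Fin r) (Fin r) ℝ, Uᵀ * U = 1 ∧ M = U * diagonal h.eigenvalues * Uᵀ := by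
  refine ⟨h.eigenvectorUnitary, ?_, ?_⟩
  · have := (Matrix.mem_unitaryGroup_iff').1 h.eigenvectorUnitary.2
    simpa [star_eq_conjTranspose, conjTranspose_eq_transpose_of_trivial] using this
  · have := h.spectral_theorem
    rw [Unitary.conjStarAlgAut_apply] at this
    simpa [star_eq_conjTranspose, conjTranspose_eq_transpose_of_trivial, Function.comp_def]
      using this

lemma form_eq {r : ℕ} (U : Matrix (Fin r) (Fin r) ℝ) (d : Fin r → ℝ) (v w : Fin r → ℝ) :
    v ⬝ᵥ (U * diagonal d * Uᵀ).mulVec w = ∑ i, d i * (Uᵀ *ᵥ v) i * (Uᵀ *ᵥ w) i := by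
  rw [← mulVec_mulVec, ← mulVec_mulVec, dotProduct_mulVec, ← mulVec_transpose, dotProduct]
  refine Finset.sum_congr rfl fun i _ => ?_
  rw [mulVec_diagonal]
  ring

theorem stmt_0 {r : ℕ} (hr : 1 ≤ r) (M : Matrix (Fin r) (Fin r) ℝ) (hM : M.IsSymm) :
    SatisfiesHyp M ↔ AtMostOnePosEigenvalue M := by
  have h : M.IsHermitian := by
    rw [IsHermitian, conjTranspose_eq_transpose_of_trivial]; exact hM
  obtain ⟨U, hU, hd⟩ := exists_diag M h
  have key : ∀ v w : Fin r → ℝ,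
      v ⬝ᵥ M.mulVec w = ∑ i, h.eigenvalues i * (Uᵀ *ᵥ v) i * (Uᵀ *ᵥ w) i := by
    intro v w
    conv_lhs => rw [hd]
    exact form_eq U _ v w
  constructor
  · intro H
    refine ⟨h, ?_⟩
    rw [Finset.card_le_one]
    intro i hi j hj
    by_contra hij
    simp only [Finset.mem_filter, Finset.mem_univ, true_and] at hi hj
    have e : ∀ k, Uᵀ *ᵥ (U *ᵥ Pi.single k 1) = Pi.single k 1 := by
      intro k; rw [mulVec_mulVec, hU, one_mulVec]
    have f : ∀ k l, (U *ᵥ Pi.single k 1) ⬝ᵥ M.mulVec (U *ᵥ Pi.single l 1)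
        = if k = l then h.eigenvalues k else 0 := by
      intro k l
      rw [key, e, e]
      simp only [Pi.single_apply, mul_ite, mul_one, mul_zero, Finset.sum_ite_eq, Finset.sum_ite_eq', Finset.mem_univ, if_true]
      by_cases hkl : k = l
      · subst hkl; simp
      · simp [hkl, Ne.symm hkl]
    have := H (U *ᵥ Pi.single i 1) (U *ᵥ Pi.single j 1) (by rw [f]; simpa using hj)
    rw [f, f, f] at this
    simp only [hij, if_false, if_true] at this
    have := mul_pos hi hj
    nlinarith
  · rintro ⟨h', hc⟩ v w hw
    rw [Finset.card_le_one] at hc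
    simp only [Finset.mem_filter, Finset.mem_univ, true_and] at hc
    have hk : ∃ k, 0 < h.eigenvalues k := by
      by_contra! hn
      rw [key] at hw
      refine absurd hw (not_lt.2 (Finset.sum_nonpos fun i _ => ?_))
      nlinarith [hn i, mul_self_nonneg ((Uᵀ *ᵥ w) i)]
    obtain ⟨k, hk⟩ := hk
    have neg : ∀ u, (Uᵀ *ᵥ u) k = 0 → u ⬝ᵥ M.mulVec u ≤ 0 := by
      intro u hu
      rw [key]
      refine Finset.sum_nonpos fun i _ => ?_
      by_cases hik : i = k
      · subst hik; simp [hu]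
      · have : h.eigenvalues i ≤ 0 := by
          by_contra! hp
          exact hik (hc i hp k hk)
        nlinarith [mul_self_nonneg ((Uᵀ *ᵥ u) i)]
    set b := (Uᵀ *ᵥ w) k with hb
    set a := (Uᵀ *ᵥ v) k with ha
    have hb0 : b ≠ 0 := fun h0 => absurd (neg w h0) (not_le.2 hw)
    have h1 := neg (b • v - a • w) (by
      rw [mulVec_sub, mulVec_smul, mulVec_smul]
      simp only [Pi.sub_apply, Pi.smul_apply, smul_eq_mul, ← ha, ← hb]
      ring)
    have hs : w ⬝ᵥ M.mulVec v = v ⬝ᵥ M.mulVec w := by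
      rw [key, key]; exact Finset.sum_congr rfl fun i _ => by ring
    simp only [mulVec_sub, mulVec_smul, sub_dotProduct, dotProduct_sub, smul_dotProduct,
      dotProduct_smul, smul_eq_mul, hs] at h1
    generalize v ⬝ᵥ M.mulVec w = x at *
    generalize v ⬝ᵥ M.mulVec v = y at *
    generalize w ⬝ᵥ M.mulVec w = z at *
    have hb2 : 0 < b ^ 2 := by positivity
    have h2 := mul_le_mul_of_nonneg_right h1 hw.le
    refine le_of_mul_le_mul_left ?_ hb2
    nlinarith [sq_nonneg (b * x - a * z)]
end

section
/- Let r ≥ 1 and let M be a real symmetric r×r matrix. Then M satisfies (Hyp) if and only if M satisfies (NDC), i.e. there exists g ∈ ℝ^r such that for every v ∈ ℝ^r with ⟨v, M g⟩ = 0 one has ⟨v, M v⟩ ≤ 0. -/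
open Matrix

/-- `M` satisfies (NDC): there exists `g ∈ ℝ^r` such that every `v ∈ ℝ^r` with
`⟨v, M g⟩ = 0` satisfies `⟨v, M v⟩ ≤ 0`. -/
def SatisfiesNDC {r : ℕ} (M : Matrix (Fin r) (Fin r) ℝ) : Prop :=
  ∃ g : Fin r → ℝ, ∀ v : Fin r → ℝ, v ⬝ᵥ M.mulVec g = 0 → v ⬝ᵥ M.mulVec v ≤ 0

theorem stmt_1 {r : ℕ} (hr : 1 ≤ r) (M : Matrix (Fin r) (Fin r) ℝ) (hM : M.IsSymm) :
    SatisfiesHyp M ↔ SatisfiesNDC M := by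
  constructor
  · intro h
    by_cases hw : ∃ w : Fin r → ℝ, 0 < w ⬝ᵥ M.mulVec w
    · obtain ⟨w, hw⟩ := hw
      refine ⟨w, fun v hv => ?_⟩
      have h1 := h v w hw
      rw [hv] at h1
      by_contra hc
      have h2 := mul_pos (not_le.mp hc) hw
      norm_num at h1
      linarith
    · exact ⟨0, fun v _ => not_lt.mp fun hv => hw ⟨v, hv⟩⟩
  · rintro ⟨g, hg⟩ v w hw
    have hsym : w ⬝ᵥ M.mulVec v = v ⬝ᵥ M.mulVec w := by
      rw [Matrix.dotProduct_mulVec, ← Matrix.mulVec_transpose, hM.eq, dotProduct_comm]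
    have ha : w ⬝ᵥ M.mulVec g ≠ 0 := fun h0 => absurd (hg w h0) (not_le.mpr hw)
    have hz := hg ((w ⬝ᵥ M.mulVec g) • v - (v ⬝ᵥ M.mulVec g) • w) (by
      simp only [sub_dotProduct, smul_dotProduct, smul_eq_mul]
      ring)
    simp only [sub_dotProduct, smul_dotProduct, smul_eq_mul, Matrix.mulVec_sub,
      Matrix.mulVec_smul, dotProduct_sub, dotProduct_smul, hsym] at hz
    generalize w ⬝ᵥ M.mulVec g = a at *
    generalize v ⬝ᵥ M.mulVec g = b at *
    generalize v ⬝ᵥ M.mulVec w = B at *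
    generalize v ⬝ᵥ M.mulVec v = p at *
    generalize w ⬝ᵥ M.mulVec w = q at *
    have ha2 : 0 < a ^ 2 := by positivity
    have h1 := mul_le_mul_of_nonneg_right hz hw.le
    refine le_of_mul_le_mul_left ?_ ha2
    nlinarith [sq_nonneg (a * B - b * q)]
end

section
/- (Local–global principle.) Let r ≥ 1, let M be a real symmetric r×r matrix whose off-diagonal entries are nonnegative, and let h ∈ ℝ^r be a nonnegative vector. Suppose that for each index i ∈ supp(M) there are given a real symmetric r×r matrix M⟨i⟩ and a linear map T⟨i⟩ : ℝ^r → ℝ^r such that: (Inh) (M v)_i = ⟨T⟨i⟩ v, M⟨i⟩ T⟨i⟩ h⟩ for every i ∈ supp(M) and every v ∈ ℝ^r; (Pull) Σ_{i ∈ supp(M)} h_i ⟨T⟨i⟩ v, M⟨i⟩ T⟨i⟩ v⟩ ≥ ⟨v, M v⟩ for every v ∈ ℝ^r; (Irr) for every nonempty proper subset S ⊊ supp(M) there exist i ∈ S and j ∈ supp(M) \ S with M_{ij} ≠ 0; (h-Pos) h_i > 0 and (M h)_i > 0 for every i ∈ supp(M); and each matrix M⟨i⟩ with i ∈ supp(M)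 satisfies (Hyp). Then M satisfies (Hyp). -/
open Matrix

open scoped Classical in
/-- The support of a matrix: the set of indices whose row is nonzero. -/
noncomputable def matrixSupp {r : ℕ} (M : Matrix (Fin r) (Fin r) ℝ) : Finset (Fin r) :=
  Finset.univ.filter fun i => M i ≠ 0

lemma aux_symm {r : ℕ} {M : Matrix (Fin r) (Fin r) ℝ} (hM : M.IsSymm) (x y : Fin r → ℝ) :
    x ⬝ᵥ M.mulVec y = y ⬝ᵥ M.mulVec x := by
  rw [Matrix.dotProduct_mulVec, ← Matrix.mulVec_transpose, hM.eq, dotProduct_comm]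

lemma aux_energy {r : ℕ} {M : Matrix (Fin r) (Fin r) ℝ} (hM : M.IsSymm) (g y : Fin r → ℝ) :
    2 * (∑ i, g i * y i ^ 2 * M.mulVec g i
      - (fun i => g i * y i) ⬝ᵥ M.mulVec (fun i => g i * y i))
    = ∑ i, ∑ j, M i j * g i * g j * (y i - y j) ^ 2 := by
  have e1 : ∑ i, g i * y i ^ 2 * M.mulVec g i = ∑ i, ∑ j, M i j * g i * g j * y i ^ 2 := by
    refine Finset.sum_congr rfl fun i _ => ?_
    simp only [Matrix.mulVec, dotProduct, Finset.mul_sum]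
    exact Finset.sum_congr rfl fun j _ => by ring
  have e2 : ∑ i, g i * y i ^ 2 * M.mulVec g i = ∑ i, ∑ j, M i j * g i * g j * y j ^ 2 := by
    rw [e1, Finset.sum_comm]
    refine Finset.sum_congr rfl fun i _ => Finset.sum_congr rfl fun j _ => ?_
    rw [hM.apply i j]; ring
  have e3 : (fun i => g i * y i) ⬝ᵥ M.mulVec (fun i => g i * y i)
      = ∑ i, ∑ j, M i j * g i * g j * (y i * y j) := by
    simp only [Matrix.mulVec, dotProduct, Finset.mul_sum]
    exact Finset.sum_congr rfl fun i _ => Finset.sum_congr rfl fun j _ => by ring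
  have : ∑ i, ∑ j, M i j * g i * g j * (y i - y j) ^ 2
      = ∑ i, ∑ j, M i j * g i * g j * y i ^ 2 + ∑ i, ∑ j, M i j * g i * g j * y j ^ 2
        - 2 * ∑ i, ∑ j, M i j * g i * g j * (y i * y j) := by
    simp only [Finset.mul_sum, ← Finset.sum_add_distrib, ← Finset.sum_sub_distrib]
    exact Finset.sum_congr rfl fun i _ => Finset.sum_congr rfl fun j _ => by ring
  rw [this, ← e1, ← e2, ← e3]; ring

/-- The local–global principle. -/
theorem stmt_2 {r : ℕ} (hr : 1 ≤ r)
    (M : Matrix (Fin r) (Fin r) ℝ) (hMsymm : M.IsSymm)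
    (hMoffdiag : ∀ i j : Fin r, i ≠ j → 0 ≤ M i j)
    (h : Fin r → ℝ) (hh : ∀ i, 0 ≤ h i)
    (Msub : Fin r → Matrix (Fin r) (Fin r) ℝ)
    (hMsubsymm : ∀ i ∈ matrixSupp M, (Msub i).IsSymm)
    (T : Fin r → ((Fin r → ℝ) →ₗ[ℝ] (Fin r → ℝ)))
    (hInh : ∀ i ∈ matrixSupp M, ∀ v : Fin r → ℝ,
      M.mulVec v i = (T i v) ⬝ᵥ (Msub i).mulVec (T i h))
    (hPull : ∀ v : Fin r → ℝ,
      ∑ i ∈ matrixSupp M, h i * ((T i v) ⬝ᵥ (Msub i).mulVec (T i v)) ≥ v ⬝ᵥ M.mulVec v)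
    (hIrr : ∀ S : Finset (Fin r), S.Nonempty → S ⊂ matrixSupp M →
      ∃ i ∈ S, ∃ j ∈ matrixSupp M \ S, M i j ≠ 0)
    (hPos : ∀ i ∈ matrixSupp M, 0 < h i ∧ 0 < M.mulVec h i)
    (hHyp : ∀ i ∈ matrixSupp M, SatisfiesHyp (Msub i)) :
    SatisfiesHyp M := by
  classical
  have hS : ∀ i, i ∈ matrixSupp M ↔ M i ≠ 0 := fun i => by simp [matrixSupp]
  have hrow : ∀ i, i ∉ matrixSupp M → ∀ j, M i j = 0 := fun i hi j => by
    have : M i = 0 := by_contra fun hc => hi ((hS i).2 hc)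
    simp [this]
  have hcol : ∀ j, j ∉ matrixSupp M → ∀ i, M i j = 0 := fun j hj i => by
    rw [← hMsymm.apply]; exact hrow j hj i
  generalize hSdef : matrixSupp M = S at *
  have hmv0 : ∀ i, i ∉ S → ∀ x, M.mulVec x i = 0 := fun i hi x => by
    simp [Matrix.mulVec, dotProduct, hrow i hi]
  have hext : ∀ x y : Fin r → ℝ, (∀ i ∈ S, x i = y i) → M.mulVec x = M.mulVec y := by
    intro x y hxy
    funext i
    simp only [Matrix.mulVec, dotProduct]
    refine Finset.sum_congr rfl fun j _ => ?_
    by_cases hj : j ∈ S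
    · simp only [hxy j hj]
    · simp [hcol j hj i]
  suffices key : ∀ v, v ⬝ᵥ M.mulVec h = 0 → v ⬝ᵥ M.mulVec v ≤ 0 by
    intro v w hw
    have hne : w ⬝ᵥ M.mulVec h ≠ 0 := fun h0 => absurd (key w h0) (not_le.2 hw)
    set t := (v ⬝ᵥ M.mulVec h) / (w ⬝ᵥ M.mulVec h) with ht
    have h1 := key (v - t • w) (by
      rw [sub_dotProduct, smul_dotProduct, ht, smul_eq_mul, div_mul_cancel₀ _ hne, sub_self])
    have h2 : (v - t • w) ⬝ᵥ M.mulVec (v - t • w)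
        = v ⬝ᵥ M.mulVec v - 2 * t * (v ⬝ᵥ M.mulVec w) + t ^ 2 * (w ⬝ᵥ M.mulVec w) := by
      simp only [Matrix.mulVec_sub, Matrix.mulVec_smul, sub_dotProduct, dotProduct_sub,
        smul_dotProduct, dotProduct_smul, smul_eq_mul, aux_symm hMsymm w v]
      ring
    rw [h2] at h1
    nlinarith [mul_le_mul_of_nonneg_right h1 hw.le,
      sq_nonneg (v ⬝ᵥ M.mulVec w - t * (w ⬝ᵥ M.mulVec w))]
  rcases S.eq_empty_or_nonempty with hSe | ⟨i0, hi0⟩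
  · intro v _
    have : M.mulVec v = 0 := by funext i; exact hmv0 i (by simp [hSe]) v
    simp [this]
  set g : Fin r → ℝ := fun i => if i ∈ S then h i else 1 with hg
  set p : Fin r → ℝ := fun i => if i ∈ S then h i else 0 with hp
  set E : Fin r → ℝ := fun i => if i ∈ S then M.mulVec h i / h i else 1 with hE
  have hMg : M.mulVec g = M.mulVec h := hext _ _ fun i hi => by simp [hg, hi]
  have hMp : M.mulVec p = M.mulVec h := hext _ _ fun i hi => by simp [hp, hi]
  have hgpos : ∀ i, 0 < g i := fun i => by
    by_cases hi : i ∈ S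
    · simpa [hg, hi] using (hPos i hi).1
    · simp [hg, hi]
  have hEpos : ∀ i, 0 < E i := fun i => by
    by_cases hi : i ∈ S
    · simpa [hE, hi] using div_pos (hPos i hi).2 (hPos i hi).1
    · simp [hE, hi]
  have hEp : ∀ i, E i * p i = M.mulVec h i := fun i => by
    by_cases hi : i ∈ S
    · simp [hE, hp, hi, div_mul_cancel₀ _ (hPos i hi).1.ne']
    · simp [hp, hi, hmv0 i hi]
  have hterm : ∀ y : Fin r → ℝ, ∀ i j, 0 ≤ M i j * g i * g j * (y i - y j) ^ 2 := by
    intro y i j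
    by_cases hij : i = j
    · simp [hij]
    · exact mul_nonneg (mul_nonneg (mul_nonneg (hMoffdiag i j hij) (hgpos i).le) (hgpos j).le)
        (sq_nonneg _)
  -- energy identity for E - M
  have hen : ∀ z : Fin r → ℝ, 2 * (∑ i, E i * z i ^ 2 - z ⬝ᵥ M.mulVec z)
      = ∑ i, ∑ j, M i j * g i * g j * (z i / g i - z j / g j) ^ 2
        + 2 * ∑ i, (if i ∈ S then 0 else z i ^ 2) := by
    intro z
    have h1 := aux_energy hMsymm g (fun i => z i / g i)
    have h2 : (fun i => g i * (z i / g i)) = z := by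
      funext i; exact mul_div_cancel₀ _ (hgpos i).ne'
    simp only [h2] at h1
    rw [← h1]
    have h3 : ∑ i, E i * z i ^ 2 = ∑ i, g i * (z i / g i) ^ 2 * M.mulVec g i
        + ∑ i, (if i ∈ S then 0 else z i ^ 2) := by
      rw [← Finset.sum_add_distrib]
      refine Finset.sum_congr rfl fun i _ => ?_
      rw [hMg]
      by_cases hi : i ∈ S
      · have := (hPos i hi).1.ne'
        simp only [hE, hg, hi, if_true]
        field_simp
        ring
      · simp [hE, hi, hmv0 i hi]
    rw [h3]; ring
  have hsq : ∀ z : Fin r → ℝ, ∀ i, 0 ≤ (if i ∈ S then 0 else z i ^ 2) := fun z i => by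
    split_ifs
    · exact le_rfl
    · exact sq_nonneg _
  have hpsd : ∀ z : Fin r → ℝ, z ⬝ᵥ M.mulVec z ≤ ∑ i, E i * z i ^ 2 := by
    intro z
    have h1 := hen z
    have h2 := Finset.sum_nonneg fun i (_ : i ∈ Finset.univ) =>
      Finset.sum_nonneg fun j (_ : j ∈ Finset.univ) => hterm (fun i => z i / g i) i j
    have h3 := Finset.sum_nonneg fun i (_ : i ∈ Finset.univ) => hsq z i
    linarith
  -- kernel
  have hker : ∀ x : Fin r → ℝ, (∀ i, E i * x i = M.mulVec x i) → ∃ c : ℝ, x = c • p := by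
    intro x hx
    have h0 : ∑ i, E i * x i ^ 2 - x ⬝ᵥ M.mulVec x = 0 := by
      rw [sub_eq_zero]
      refine Finset.sum_congr rfl fun i _ => ?_
      rw [← hx i]; ring
    have h1 := hen x
    have h2 := Finset.sum_nonneg fun i (_ : i ∈ Finset.univ) =>
      Finset.sum_nonneg fun j (_ : j ∈ Finset.univ) => hterm (fun i => x i / g i) i j
    have h3 := Finset.sum_nonneg fun i (_ : i ∈ Finset.univ) => hsq x i
    rw [h0] at h1
    have h4 : ∑ i, ∑ j, M i j * g i * g j * (x i / g i - x j / g j) ^ 2 = 0 := by linarith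
    have h6 : ∀ i j, M i j ≠ 0 → x i / g i = x j / g j := by
      intro i j hij
      have a := (Finset.sum_eq_zero_iff_of_nonneg fun i _ =>
        Finset.sum_nonneg fun j _ => hterm (fun i => x i / g i) i j).1 h4 i (Finset.mem_univ i)
      have b := (Finset.sum_eq_zero_iff_of_nonneg fun j _ =>
        hterm (fun i => x i / g i) i j).1 a j (Finset.mem_univ j)
      have c : (x i / g i - x j / g j) ^ 2 = 0 :=
        (mul_eq_zero.1 b).resolve_left
          (mul_ne_zero (mul_ne_zero hij (hgpos i).ne') (hgpos j).ne')
      exact sub_eq_zero.1 (pow_eq_zero_iff (two_ne_zero)|>.1 c)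
    have h7 : ∀ i ∈ S, x i / g i = x i0 / g i0 := by
      by_contra hcon
      push Not at hcon
      obtain ⟨k, hk, hkne⟩ := hcon
      obtain ⟨i, hi, j, hj, hij⟩ := hIrr (S.filter fun i => x i / g i = x i0 / g i0)
        ⟨i0, by simp [hi0]⟩
        (Finset.filter_ssubset.2 ⟨k, hk, hkne⟩)
      simp only [Finset.mem_filter, Finset.mem_sdiff, not_and] at hi hj
      exact hj.2 hj.1 ((h6 i j hij).symm.trans hi.2)
    refine ⟨x i0 / g i0, ?_⟩
    funext i
    by_cases hi : i ∈ S
    · rw [← h7 i hi]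
      have := (hPos i hi).1.ne'
      simp [hg, hp, hi, this]
    · have := hx i
      rw [hmv0 i hi] at this
      simp only [hE, hi, if_false, one_mul] at this
      simp [hp, hi, this]
  have hpp : 0 < p ⬝ᵥ p := by
    have : p i0 ≠ 0 := by simpa [hp, hi0] using (hPos i0 hi0).1.ne'
    exact lt_of_lt_of_le (mul_self_pos.2 this)
      (Finset.single_le_sum (f := fun i => p i * p i) (fun i _ => mul_self_nonneg _)
        (Finset.mem_univ i0))
  -- surjectivity
  let L : Matrix (Fin r) (Fin r) ℝ := Matrix.diagonal E - M
  have hLapp : ∀ x i, L.mulVec x i = E i * x i - M.mulVec x i := fun x i => by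
    simp [L, Matrix.sub_mulVec, Matrix.mulVec_diagonal]
  have hLsymm : L.IsSymm := by
    simp [L, Matrix.IsSymm, Matrix.transpose_sub, hMsymm.eq]
  have hLp : L.mulVec p = 0 := by
    funext i; rw [hLapp, hEp, hMp]; simp
  have hpL : ∀ x, p ⬝ᵥ L.mulVec x = 0 := fun x => by
    rw [aux_symm hLsymm, hLp, dotProduct_zero]
  let K : (Fin r → ℝ) →ₗ[ℝ] (Fin r → ℝ) := (L + Matrix.vecMulVec p p).mulVecLin
  have hK : ∀ x, K x = L.mulVec x + (p ⬝ᵥ x) • p := fun x => by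
    simp only [K, Matrix.mulVecLin_apply, Matrix.add_mulVec]
    congr 1
    funext i
    simp [Matrix.mulVec, dotProduct, Matrix.vecMulVec_apply, Finset.mul_sum, Finset.sum_mul]
    exact Finset.sum_congr rfl fun j _ => by ring
  have hpK : ∀ x, p ⬝ᵥ K x = (p ⬝ᵥ x) * (p ⬝ᵥ p) := fun x => by
    rw [hK, dotProduct_add, hpL, dotProduct_smul, smul_eq_mul, zero_add]
  have hKinj : Function.Injective K := by
    rw [injective_iff_map_eq_zero]
    intro x hx
    have h1 := hpK x
    rw [hx, dotProduct_zero] at h1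
    have h2 : p ⬝ᵥ x = 0 := (mul_eq_zero.1 h1.symm).resolve_right hpp.ne'
    have h3 := hK x
    rw [hx, h2, zero_smul, add_zero] at h3
    obtain ⟨c, rfl⟩ := hker x fun i => by
      have := congrFun h3 i
      rw [hLapp] at this
      simp only [Pi.zero_apply] at this
      linarith
    rw [dotProduct_smul, smul_eq_mul] at h2
    rw [(mul_eq_zero.1 h2).resolve_right hpp.ne', zero_smul]
  have hKsurj : Function.Surjective K := LinearMap.injective_iff_surjective.1 hKinj
  intro v hv
  obtain ⟨u, hu⟩ := hKsurj (fun i => E i * v i)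
  have hpu : p ⬝ᵥ u = 0 := by
    have h1 := hpK u
    have h2 : p ⬝ᵥ K u = 0 := by
      rw [hu, ← hv]
      refine Finset.sum_congr rfl fun i _ => ?_
      rw [← hEp i]; ring
    rw [h2] at h1
    exact (mul_eq_zero.1 h1.symm).resolve_right hpp.ne'
  have hMu : ∀ i, M.mulVec u i = - (E i * (v i - u i)) := by
    intro i
    have := congrFun hu i
    rw [hK, hpu, zero_smul, add_zero, hLapp] at this
    linarith
  -- pull
  have hpull2 : u ⬝ᵥ M.mulVec u ≤ ∑ i, E i * (v i - u i) ^ 2 := by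
    refine (hPull u).le.trans ?_
    refine le_trans (Finset.sum_le_sum (g := fun i => E i * (v i - u i) ^ 2) fun i hi => ?_)
      (Finset.sum_le_univ_sum_of_nonneg fun i => mul_nonneg (hEpos i).le (sq_nonneg _))
    obtain ⟨hp1, hp2⟩ := hPos i hi
    have a := hHyp i hi (T i u) (T i h) (by rw [← hInh i hi h]; exact hp2)
    rw [← hInh i hi h, ← hInh i hi u, hMu i] at a
    have hEi : M.mulVec h i = E i * h i := by
      simp [hE, hi, div_mul_cancel₀ _ hp1.ne']
    rw [hEi] at a
    have hpos := hEpos i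
    refine le_of_mul_le_mul_left ?_ hpos
    nlinarith [a]
  set z : Fin r → ℝ := v - u with hz
  have hvz : v = u + z := by simp [hz]
  have hzD : z ⬝ᵥ M.mulVec u = - ∑ i, E i * z i ^ 2 := by
    rw [← Finset.sum_neg_distrib]
    refine Finset.sum_congr rfl fun i _ => ?_
    rw [hMu i, hz, Pi.sub_apply]; ring
  have hpz := hpsd z
  have hpull3 : u ⬝ᵥ M.mulVec u ≤ ∑ i, E i * z i ^ 2 := hpull2
  have hexp : v ⬝ᵥ M.mulVec v
      = u ⬝ᵥ M.mulVec u + 2 * (z ⬝ᵥ M.mulVec u) + z ⬝ᵥ M.mulVec z := by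
    rw [hvz]
    simp only [Matrix.mulVec_add, add_dotProduct, dotProduct_add, aux_symm hMsymm u z]
    ring
  rw [hexp]
  linarith
end

section
/- (Pullback equality criterion.) Let r ≥ 1, let M be a real symmetric r×r matrix and h ∈ ℝ^r. Suppose that for each index i ∈ supp(M) there is a real symmetric r×r matrix M⟨i⟩ with supp(M⟨i⟩) ⊆ supp(M), such that: (Inh) (M v)_i = ⟨v, M⟨i⟩ h⟩ for every i ∈ supp(M) and every v ∈ ℝ^r; and (T-Inv) (M⟨i⟩)_{jk} = (M⟨j⟩)_{ki} = (M⟨k⟩)_{ij} for all i, j, k ∈ supp(M). Then Σ_{i ∈ supp(M)} h_i ⟨v, M⟨i⟩ v⟩ = ⟨v, M v⟩ for every v ∈ ℝ^r. -/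
open Matrix

/-- The pullback equality criterion. -/
theorem stmt_3 {r : ℕ} (hr : 1 ≤ r)
    (M : Matrix (Fin r) (Fin r) ℝ) (hMsymm : M.IsSymm)
    (h : Fin r → ℝ)
    (Msub : Fin r → Matrix (Fin r) (Fin r) ℝ)
    (hMsubsymm : ∀ i ∈ matrixSupp M, (Msub i).IsSymm)
    (hMsubsupp : ∀ i ∈ matrixSupp M, matrixSupp (Msub i) ⊆ matrixSupp M)
    (hInh : ∀ i ∈ matrixSupp M, ∀ v : Fin r → ℝ,
      M.mulVec v i = v ⬝ᵥ (Msub i).mulVec h)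
    (hTInv : ∀ i ∈ matrixSupp M, ∀ j ∈ matrixSupp M, ∀ k ∈ matrixSupp M,
      Msub i j k = Msub j k i ∧ Msub j k i = Msub k i j) :
    ∀ v : Fin r → ℝ,
      ∑ i ∈ matrixSupp M, h i * (v ⬝ᵥ (Msub i).mulVec v) = v ⬝ᵥ M.mulVec v := by
  intro v
  have hz : ∀ (A : Matrix (Fin r) (Fin r) ℝ) (i : Fin r), i ∉ matrixSupp A → ∀ j, A i j = 0 := by
    intro A i hi j
    have h0 : A i = 0 := by
      by_contra hne
      exact hi (by simp [matrixSupp, hne])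
    rw [h0]; rfl
  have key : ∀ i ∈ matrixSupp M, ∀ w u : Fin r → ℝ, w ⬝ᵥ (Msub i).mulVec u =
      ∑ j ∈ matrixSupp M, ∑ k ∈ matrixSupp M, w j * (Msub i j k * u k) := by
    intro i hi w u
    have hz1 : ∀ j, j ∉ matrixSupp M → ∀ k, Msub i j k = 0 := fun j hj k =>
      hz (Msub i) j (fun hh => hj (hMsubsupp i hi hh)) k
    simp only [dotProduct, mulVec, Finset.mul_sum]
    symm
    rw [← Finset.sum_subset (Finset.subset_univ (matrixSupp M))]
    · refine Finset.sum_congr rfl fun j _ => ?_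
      refine Finset.sum_subset (Finset.subset_univ (matrixSupp M)) fun k _ hk => ?_
      rw [← (hMsubsymm i hi).apply j k, hz1 k hk]
      simp
    · intro j _ hj
      refine Finset.sum_eq_zero fun k _ => ?_
      rw [hz1 j hj]
      simp
  have hR : v ⬝ᵥ M.mulVec v = ∑ j ∈ matrixSupp M, v j * M.mulVec v j := by
    symm
    refine Finset.sum_subset (Finset.subset_univ (matrixSupp M)) fun j _ hj => ?_
    have : M.mulVec v j = 0 := by
      simp only [mulVec, dotProduct]
      exact Finset.sum_eq_zero fun k _ => by rw [hz M j hj]; simp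
    rw [this, mul_zero]
  rw [hR]
  refine (Finset.sum_congr rfl fun i hi => congrArg (h i * ·) (key i hi v v)).trans ?_
  refine Eq.trans ?_ (Finset.sum_congr rfl fun j hj =>
    congrArg (v j * ·) ((hInh j hj v).trans (key j hj v h))).symm
  simp only [Finset.mul_sum]
  rw [Finset.sum_comm]
  refine Finset.sum_congr rfl fun j hj => ?_
  rw [Finset.sum_comm]
  refine Finset.sum_congr rfl fun k hk => Finset.sum_congr rfl fun i hi => ?_
  rw [(hTInv i hi j hj k hk).1]
  ring
end

section
/- (Log-concavity for matroids / weak Mason conjecture.) Let M be a matroid on a finite ground set, and let k be an integer with 1 ≤ k < rk(M). Then I(k)² ≥ (1 + 1/k) · I(k−1) · I(k+1). -/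
/-- The number of independent sets of cardinality `k` in the matroid `M`. -/
noncomputable def numIndep {α : Type*} (M : Matroid α) (k : ℕ) : ℕ :=
  {S : Set α | M.Indep S ∧ S.ncard = k}.ncard

/-- The rank of the matroid `M`: the maximal size of an independent set. -/
noncomputable def matroidRk {α : Type*} (M : Matroid α) : ℕ :=
  sSup {n : ℕ | ∃ S : Set α, M.Indep S ∧ S.ncard = n}

open Matrix Finset in
lemma spec_aux {ι : Type*} [Fintype ι] [DecidableEq ι] (S : Matrix ι ι ℝ) (hS : S.IsSymm)
    (h1 : ∀ v : ι → ℝ, v ⬝ᵥ (S *ᵥ v) ≤ v ⬝ᵥ v)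
    (h2 : ∀ v : ι → ℝ, v ⬝ᵥ (S *ᵥ v) ≤ (S *ᵥ v) ⬝ᵥ (S *ᵥ v))
    (u : ι → ℝ) (h3 : ∀ v : ι → ℝ, S *ᵥ v = v → v ⬝ᵥ u = 0) :
    u ⬝ᵥ (S *ᵥ u) ≤ 0 := by
  have hH : S.IsHermitian := by
    rw [Matrix.IsHermitian, Matrix.conjTranspose_eq_transpose_of_trivial]; exact hS
  set b := hH.eigenvectorBasis with hb
  have hbe : ∀ j, S *ᵥ (b j).ofLp = hH.eigenvalues j • (b j).ofLp := hH.mulVec_eigenvectorBasis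
  have hin : ∀ x y : EuclideanSpace ℝ ι, inner ℝ x y = x.ofLp ⬝ᵥ y.ofLp := by
    intro x y
    rw [EuclideanSpace.inner_eq_star_dotProduct, dotProduct_comm]; simp
  have hb1 : ∀ j, (b j).ofLp ⬝ᵥ (b j).ofLp = 1 := by
    intro j
    rw [← hin, real_inner_self_eq_norm_sq, b.orthonormal.1 j]; norm_num
  have hl : ∀ j, hH.eigenvalues j ≤ 0 ∨ hH.eigenvalues j = 1 := by
    intro j
    have a1 := h1 (b j).ofLp
    have a2 := h2 (b j).ofLp
    rw [hbe, dotProduct_smul, hb1, smul_eq_mul, mul_one] at a1 a2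
    rw [smul_dotProduct, dotProduct_smul, hb1] at a2
    simp only [smul_eq_mul, mul_one] at a2
    by_contra! hc
    have : hH.eigenvalues j < 1 := lt_of_le_of_ne a1 hc.2
    nlinarith [hc.1]
  have key := b.sum_inner_mul_inner (WithLp.toLp 2 u) (WithLp.toLp 2 (S *ᵥ u))
  rw [hin] at key
  simp only at key
  rw [← key]
  apply Finset.sum_nonpos
  intro j _
  rw [hin, hin]
  have e1 : (b j).ofLp ⬝ᵥ (S *ᵥ u) = hH.eigenvalues j * ((b j).ofLp ⬝ᵥ u) := by
    rw [dotProduct_mulVec, ← mulVec_transpose, hS.eq, hbe, smul_dotProduct, smul_eq_mul]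
  simp only
  rw [e1, dotProduct_comm u]
  rcases hl j with h | h
  · nlinarith [mul_self_nonneg ((b j).ofLp ⬝ᵥ u)]
  · rw [h3 (b j).ofLp (by rw [hbe, h, one_smul])]; simp

open Matrix Finset in
lemma spec_w {ι : Type*} [Fintype ι] (A : ι → ι → ℝ) (hA : ∀ i j, A i j = A j i)
    (D : ι → ℝ) (hD : ∀ i, 0 < D i)
    (h1 : ∀ v : ι → ℝ, ∑ i, v i * ∑ j, A i j * v j ≤ ∑ i, D i * v i ^ 2)
    (h2 : ∀ v : ι → ℝ, ∑ i, v i * ∑ j, A i j * v j ≤ ∑ i, (∑ j, A i j * v j) ^ 2 / D i)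
    (u : ι → ℝ) (h3 : ∀ v : ι → ℝ, (∀ i, ∑ j, A i j * v j = D i * v i) → ∑ i, D i * v i * u i = 0) :
    ∑ i, u i * ∑ j, A i j * u j ≤ 0 := by
  classical
  set q : ι → ℝ := fun i => (√(D i))⁻¹ with hq
  have hq0 : ∀ i, 0 < q i := fun i => inv_pos.2 (Real.sqrt_pos.2 (hD i))
  have hqD : ∀ i, D i = (q i ^ 2)⁻¹ := by
    intro i; simp only [hq, inv_pow, inv_inv]; rw [Real.sq_sqrt (hD i).le]
  let S : Matrix ι ι ℝ := Matrix.of fun i j => q i * A i j * q j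
  have hmv : ∀ x i, (S *ᵥ x) i = q i * ∑ j, A i j * (q j * x j) := by
    intro x i
    simp only [mulVec, dotProduct, S, Matrix.of_apply, Finset.mul_sum]
    exact Finset.sum_congr rfl fun j _ => by ring
  have hquad : ∀ x : ι → ℝ, x ⬝ᵥ (S *ᵥ x) = ∑ i, (q i * x i) * ∑ j, A i j * (q j * x j) := by
    intro x
    simp only [dotProduct, hmv]
    exact Finset.sum_congr rfl fun j _ => by ring
  have := spec_aux S (by ext i j; simp only [S, Matrix.transpose_apply, Matrix.of_apply]; rw [hA]; ring)
    (by
      intro x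
      rw [hquad]
      refine (h1 (fun i => q i * x i)).trans (le_of_eq ?_)
      simp only [dotProduct]
      refine Finset.sum_congr rfl fun i _ => ?_
      rw [hqD]; have := (hq0 i).ne'; field_simp)
    (by
      intro x
      rw [hquad]
      refine (h2 (fun i => q i * x i)).trans (le_of_eq ?_)
      simp only [dotProduct, hmv]
      refine Finset.sum_congr rfl fun i _ => ?_
      rw [hqD]; have := (hq0 i).ne'; field_simp)
    (fun i => (q i)⁻¹ * u i)
    (by
      intro x hx
      have := h3 (fun i => q i * x i) (by
        intro i
        have h := congrFun hx i
        rw [hmv] at h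
        have hh := (hq0 i).ne'
        rw [hqD]
        generalize (∑ j, A i j * (q j * x j)) = y at h ⊢
        rw [← h]
        field_simp)
      rw [← this]
      simp only [dotProduct]
      refine Finset.sum_congr rfl fun i _ => ?_
      rw [hqD]; have := (hq0 i).ne'; field_simp)
  rw [hquad] at this
  have e : ∀ i, q i * ((q i)⁻¹ * u i) = u i := fun i => by
    have := (hq0 i).ne'; field_simp
  simpa only [e] using this

open Finset in
lemma hyp_of_le {ι : Type*} [Fintype ι] (A : ι → ι → ℝ) (hA : ∀ i j, A i j = A j i)
    (h v : ι → ℝ) (c : ℝ) (hh : 0 ≤ ∑ i, h i * ∑ j, A i j * h j)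
    (hc : ∑ i, (v i - c * h i) * ∑ j, A i j * (v j - c * h j) ≤ 0) :
    (∑ i, v i * ∑ j, A i j * v j) * (∑ i, h i * ∑ j, A i j * h j)
      ≤ (∑ i, v i * ∑ j, A i j * h j) ^ 2 := by
  have sym : ∑ i, h i * ∑ j, A i j * v j = ∑ i, v i * ∑ j, A i j * h j := by
    simp only [Finset.mul_sum]
    rw [Finset.sum_comm]
    refine Finset.sum_congr rfl fun i _ => Finset.sum_congr rfl fun j _ => ?_
    rw [hA]; ring
  have e : ∑ i, (v i - c * h i) * ∑ j, A i j * (v j - c * h j)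
      = (∑ i, v i * ∑ j, A i j * v j) - c * (∑ i, v i * ∑ j, A i j * h j)
        - c * (∑ i, h i * ∑ j, A i j * v j) + c ^ 2 * (∑ i, h i * ∑ j, A i j * h j) := by
    simp only [Finset.mul_sum]
    simp only [← Finset.sum_sub_distrib, ← Finset.sum_add_distrib]
    refine Finset.sum_congr rfl fun i _ => Finset.sum_congr rfl fun j _ => ?_
    ring
  rw [e, sym] at hc
  set X := ∑ i, v i * ∑ j, A i j * h j
  set Y := ∑ i, h i * ∑ j, A i j * h j
  set Z := ∑ i, v i * ∑ j, A i j * v j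
  nlinarith [sq_nonneg (X - c * Y), mul_le_mul_of_nonneg_right hc hh]

open Finset in
lemma garland {ι : Type*} [Fintype ι] (A : ι → ι → ℝ) (hA : ∀ i j, A i j = A j i)
    (hA0 : ∀ i j, 0 ≤ A i j) (h : ι → ℝ) (hpos : ∀ i, 0 < h i) (o : ι)
    (ho : ∀ i, 0 < ∑ j, A i j * h j → 0 < A o i)
    (h2 : ∀ v : ι → ℝ, ∑ i, v i * ∑ j, A i j * v j
      ≤ ∑ i, h i * (∑ j, A i j * v j) ^ 2 / (∑ j, A i j * h j))
    (u : ι → ℝ) (hu : ∑ i, u i * ∑ j, A i j * h j = 0) :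
    ∑ i, u i * ∑ j, A i j * u j ≤ 0 := by
  classical
  set r : ι → ℝ := fun i => ∑ j, A i j * h j with hr
  have hr0 : ∀ i, 0 ≤ r i := fun i => Finset.sum_nonneg fun j _ => mul_nonneg (hA0 i j) (hpos j).le
  have hz : ∀ i, r i = 0 → ∀ j, A i j = 0 := by
    intro i hi j
    have := (Finset.sum_eq_zero_iff_of_nonneg
      (fun j _ => mul_nonneg (hA0 i j) (hpos j).le)).1 hi j (Finset.mem_univ j)
    exact (mul_eq_zero.1 this).resolve_right (hpos j).ne'
  set D : ι → ℝ := fun i => if r i = 0 then 1 else r i / h i with hDdef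
  have hD : ∀ i, 0 < D i := by
    intro i
    simp only [hDdef]
    split_ifs with hi
    · norm_num
    · exact div_pos (lt_of_le_of_ne (hr0 i) (Ne.symm hi)) (hpos i)
  have hDr : ∀ i, r i / h i ≤ D i := by
    intro i
    simp only [hDdef]
    split_ifs with hi
    · rw [hi]; simp
    · exact le_rfl
  have id1 : ∀ v : ι → ℝ, ∑ i, ∑ j, A i j * h i * h j * (v i / h i - v j / h j) ^ 2
      = 2 * (∑ i, r i / h i * v i ^ 2 - ∑ i, v i * ∑ j, A i j * v j) := by
    intro v
    have e1 : ∀ i j, A i j * h i * h j * (v i / h i - v j / h j) ^ 2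
        = A i j * h j * (v i ^ 2 / h i) + A j i * h i * (v j ^ 2 / h j) - 2 * (v i * (A i j * v j)) := by
      intro i j
      have := (hpos i).ne'
      have := (hpos j).ne'
      rw [hA j i]
      field_simp
      ring
    simp only [e1, Finset.sum_sub_distrib, Finset.sum_add_distrib]
    have e2 : ∑ i, ∑ j, A j i * h i * (v j ^ 2 / h j) = ∑ i, ∑ j, A i j * h j * (v i ^ 2 / h i) :=
      Finset.sum_comm
    have e3 : ∑ i, ∑ j, A i j * h j * (v i ^ 2 / h i) = ∑ i, r i / h i * v i ^ 2 := by
      refine Finset.sum_congr rfl fun i _ => ?_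
      rw [← Finset.sum_mul]; ring
    rw [e2, e3]
    simp only [← Finset.mul_sum]
    ring
  have sq0 : ∀ v : ι → ℝ, ∀ i j, 0 ≤ A i j * h i * h j * (v i / h i - v j / h j) ^ 2 := fun v i j =>
    mul_nonneg (mul_nonneg (mul_nonneg (hA0 i j) (hpos i).le) (hpos j).le) (sq_nonneg _)
  have hDs : ∀ v : ι → ℝ, ∑ i, r i / h i * v i ^ 2 ≤ ∑ i, D i * v i ^ 2 := fun v =>
    Finset.sum_le_sum fun i _ => mul_le_mul_of_nonneg_right (hDr i) (sq_nonneg _)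
  refine spec_w A hA D hD ?_ ?_ u ?_
  · intro v
    have := Finset.sum_nonneg fun i (_ : i ∈ univ) => Finset.sum_nonneg fun j (_ : j ∈ univ) => sq0 v i j
    rw [id1] at this
    linarith [hDs v]
  · intro v
    refine (h2 v).trans (Finset.sum_le_sum fun i _ => ?_)
    change h i * (∑ j, A i j * v j) ^ 2 / r i ≤ _
    by_cases hi : r i = 0
    · simp [hz i hi]
    · simp only [hDdef, if_neg hi]
      apply le_of_eq
      have := (hpos i).ne'
      field_simp
  · intro v hv
    have t1 : ∑ i, v i * ∑ j, A i j * v j = ∑ i, D i * v i ^ 2 :=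
      Finset.sum_congr rfl fun i _ => by rw [hv]; ring
    have t2 : ∑ i, ∑ j, A i j * h i * h j * (v i / h i - v j / h j) ^ 2 = 0 := by
      apply le_antisymm
      · rw [id1]; linarith [hDs v]
      · exact Finset.sum_nonneg fun i _ => Finset.sum_nonneg fun j _ => sq0 v i j
    have t3 := (Finset.sum_eq_zero_iff_of_nonneg
      (fun i _ => Finset.sum_nonneg fun j _ => sq0 v i j)).1 t2 o (mem_univ o)
    have t4 := fun i => (Finset.sum_eq_zero_iff_of_nonneg (fun j _ => sq0 v o j)).1 t3 i (mem_univ i)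
    have t5 : ∀ i, D i * v i * u i = (v o / h o) * (u i * r i) := by
      intro i
      by_cases hi : r i = 0
      · have hvi := hv i
        have : D i * v i = 0 := by rw [← hvi]; simp [hz i hi]
        rw [this, hi]; ring
      · have hAo := ho i (lt_of_le_of_ne (hr0 i) (Ne.symm hi))
        have hp := mul_pos (mul_pos hAo (hpos o)) (hpos i)
        have h5 := (mul_eq_zero.1 (t4 i)).resolve_left hp.ne'
        have h6 : v o / h o = v i / h i := by
          have := pow_eq_zero_iff (two_ne_zero) |>.1 h5
          linarith
        rw [h6]
        simp only [hDdef, if_neg hi]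
        have := (hpos i).ne'
        field_simp
    rw [Finset.sum_congr rfl fun i _ => t5 i, ← Finset.mul_sum, hu, mul_zero]

open Finset in
lemma hyp_step {ι : Type*} [Fintype ι] (A : ι → ι → ℝ) (B : ι → ι → ι → ℝ)
    (hA : ∀ i j, A i j = A j i)
    (hB0 : ∀ c i j, 0 ≤ B c i j) (h : ι → ℝ) (hpos : ∀ i, 0 < h i) (o : ι)
    (ho : ∀ i, 0 < ∑ j, A i j * h j → 0 < A o i)
    (hAB : ∀ i j, A i j = ∑ c, h c * B c i j)
    (hAB' : ∀ i j, A i j = ∑ c, B i j c * h c)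
    (hB : ∀ c (v : ι → ℝ), (∑ i, v i * ∑ j, B c i j * v j) * (∑ i, h i * ∑ j, B c i j * h j)
      ≤ (∑ i, v i * ∑ j, B c i j * h j) ^ 2) (v : ι → ℝ) :
    (∑ i, v i * ∑ j, A i j * v j) * (∑ i, h i * ∑ j, A i j * h j)
      ≤ (∑ i, v i * ∑ j, A i j * h j) ^ 2 := by
  have hA0 : ∀ i j, 0 ≤ A i j := fun i j => by
    rw [hAB]; exact Finset.sum_nonneg fun c _ => mul_nonneg (hpos c).le (hB0 c i j)
  have hAv : ∀ (v : ι → ℝ) a, ∑ j, A a j * v j = ∑ i, v i * ∑ j, B a i j * h j := by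
    intro v a
    refine Finset.sum_congr rfl fun j _ => ?_
    rw [hAB']; ring
  have hnn : 0 ≤ ∑ i, h i * ∑ j, A i j * h j :=
    Finset.sum_nonneg fun i _ => mul_nonneg (hpos i).le
      (Finset.sum_nonneg fun j _ => mul_nonneg (hA0 i j) (hpos j).le)
  rcases hnn.eq_or_lt with h0 | h0
  · rw [← h0, mul_zero]; positivity
  have h2 : ∀ v : ι → ℝ, ∑ i, v i * ∑ j, A i j * v j
      ≤ ∑ i, h i * (∑ j, A i j * v j) ^ 2 / (∑ j, A i j * h j) := by
    intro v
    have e : ∑ i, v i * ∑ j, A i j * v j = ∑ c, h c * ∑ i, v i * ∑ j, B c i j * v j := by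
      simp only [hAB, Finset.mul_sum, Finset.sum_mul]
      conv_rhs => rw [Finset.sum_comm]
      refine Finset.sum_congr rfl fun i _ => ?_
      conv_rhs => rw [Finset.sum_comm]
      refine Finset.sum_congr rfl fun j _ => Finset.sum_congr rfl fun c _ => ?_
      ring
    rw [e]
    refine Finset.sum_le_sum fun c _ => ?_
    have hc := hB c v
    rw [← hAv h c, ← hAv v c] at hc
    have hrc : 0 ≤ ∑ j, A c j * h j :=
      Finset.sum_nonneg fun j _ => mul_nonneg (hA0 c j) (hpos j).le
    rcases hrc.eq_or_lt with hr | hr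
    · have hz : ∀ i j, B c i j = 0 := by
        rw [hAv h c] at hr
        intro i j
        have a1 := (Finset.sum_eq_zero_iff_of_nonneg (fun i _ => mul_nonneg (hpos i).le
          (Finset.sum_nonneg fun j _ => mul_nonneg (hB0 c i j) (hpos j).le))).1 hr.symm i (mem_univ i)
        have a2 := (mul_eq_zero.1 a1).resolve_left (hpos i).ne'
        have a3 := (Finset.sum_eq_zero_iff_of_nonneg
          (fun j _ => mul_nonneg (hB0 c i j) (hpos j).le)).1 a2 j (mem_univ j)
        exact (mul_eq_zero.1 a3).resolve_right (hpos j).ne'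
      rw [← hr]; simp [hz]
    · rw [le_div_iff₀ hr, mul_assoc]
      exact mul_le_mul_of_nonneg_left hc (hpos c).le
  refine hyp_of_le A hA h v ((∑ i, v i * ∑ j, A i j * h j) / (∑ i, h i * ∑ j, A i j * h j)) hnn ?_
  refine garland A hA hA0 h hpos o ho h2 _ ?_
  simp only [sub_mul, Finset.sum_sub_distrib, mul_assoc]
  rw [← Finset.mul_sum]
  field_simp
  simp

/-- A multiset is independent. -/
def isI {α : Type*} (M : Matroid α) (s : Multiset α) : Prop := s.Nodup ∧ M.Indep {x | x ∈ s}

/-- Adding an optional element. -/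
def act {α : Type*} : Option α → Multiset α → Multiset α
  | none, s => s
  | some i, s => i ::ₘ s

/-- The weights. -/
def wt {α : Type*} (ε : ℝ) : Option α → ℝ
  | none => ε
  | some _ => 1

open Classical in
/-- Weighted number of words. -/
noncomputable def GG {α : Type*} [Fintype α] (M : Matroid α) (ε : ℝ) : ℕ → Multiset α → ℝ
  | 0, s => if isI M s then 1 else 0
  | m + 1, s => ∑ c : Option α, wt ε c * GG M ε m (act c s)

lemma act_comm {α : Type*} (a b : Option α) (s : Multiset α) :
    act a (act b s) = act b (act a s) := by
  cases a <;> cases b <;> simp [act, Multiset.cons_swap]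

lemma isI_of_act {α : Type*} (M : Matroid α) (a : Option α) (s : Multiset α)
    (h : isI M (act a s)) : isI M s := by
  cases a with
  | none => exact h
  | some i =>
    obtain ⟨h1, h2⟩ := h
    refine ⟨(Multiset.nodup_cons.1 h1).2, h2.subset ?_⟩
    intro x hx
    exact Multiset.mem_cons_of_mem hx

lemma isI_cons {α : Type*} (M : Matroid α) (i : α) (s : Multiset α) :
    isI M (i ::ₘ s) ↔ i ∉ s ∧ s.Nodup ∧ M.Indep (insert i {x | x ∈ s}) := by
  have : {x | x ∈ i ::ₘ s} = insert i {x | x ∈ s} := by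
    ext x; simp
  rw [isI, this, Multiset.nodup_cons, and_assoc]

lemma wt_nonneg {α : Type*} {ε : ℝ} (hε : 0 ≤ ε) (c : Option α) : 0 ≤ wt ε c := by
  cases c <;> simp [wt, hε]

lemma wt_pos {α : Type*} {ε : ℝ} (hε : 0 < ε) (c : Option α) : 0 < wt ε c := by
  cases c <;> simp [wt, hε]

lemma GG_nonneg {α : Type*} [Fintype α] (M : Matroid α) {ε : ℝ} (hε : 0 ≤ ε) (m : ℕ) :
    ∀ s, 0 ≤ GG M ε m s := by
  induction m with
  | zero => intro s; simp only [GG]; split_ifs <;> norm_num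
  | succ m ih =>
    intro s
    simp only [GG]
    exact Finset.sum_nonneg fun c _ => mul_nonneg (wt_nonneg hε c) (ih _)

lemma GG_zero {α : Type*} [Fintype α] (M : Matroid α) (ε : ℝ) (m : ℕ) :
    ∀ s, ¬ isI M s → GG M ε m s = 0 := by
  induction m with
  | zero => intro s hs; simp only [GG, if_neg hs]
  | succ m ih =>
    intro s hs
    simp only [GG]
    refine Finset.sum_eq_zero fun c _ => ?_
    rw [ih _ (fun h => hs (isI_of_act M c s h)), mul_zero]

lemma GG_pos {α : Type*} [Fintype α] (M : Matroid α) {ε : ℝ} (hε : 0 < ε) (m : ℕ) :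
    ∀ s, isI M s → 0 < GG M ε m s := by
  induction m with
  | zero => intro s hs; simp only [GG, if_pos hs]; norm_num
  | succ m ih =>
    intro s hs
    simp only [GG]
    refine Finset.sum_pos' (fun c _ => mul_nonneg (wt_nonneg hε.le c) (GG_nonneg M hε.le m _))
      ⟨none, Finset.mem_univ _, ?_⟩
    exact mul_pos (wt_pos hε _) (ih _ hs)

lemma fiber_psd {α β : Type*} [Fintype α] [DecidableEq β] (φ : α → β) (z : α → ℝ) :
    0 ≤ ∑ i, ∑ j, (if φ i = φ j then z i * z j else 0) := by
  have : ∑ i, ∑ j, (if φ i = φ j then z i * z j else 0)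
      = ∑ c ∈ Finset.univ.image φ, (∑ i, if φ i = c then z i else 0) ^ 2 := by
    simp only [sq, Finset.sum_mul_sum]
    rw [Finset.sum_comm]
    rw [Finset.sum_comm (s := Finset.univ.image φ)]
    rw [Finset.sum_comm]
    refine Finset.sum_congr rfl fun i _ => ?_
    rw [Finset.sum_comm]
    refine Finset.sum_congr rfl fun j _ => ?_
    rw [Finset.sum_eq_single (φ i)]
    · by_cases h : φ i = φ j <;> simp [h, eq_comm]
    · intro c _ hc
      rw [if_neg (Ne.symm hc), zero_mul]
    · intro h
      exact absurd (Finset.mem_image_of_mem φ (Finset.mem_univ i)) h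
  rw [this]
  exact Finset.sum_nonneg fun c _ => sq_nonneg _

lemma isI_two {α : Type*} (M : Matroid α) (hE : M.E = Set.univ) (s : Multiset α) (i j : α)
    (hi : isI M (i ::ₘ s)) (hj : isI M (j ::ₘ s)) :
    isI M (j ::ₘ i ::ₘ s) ↔
      M.closure (insert i {x | x ∈ s}) ≠ M.closure (insert j {x | x ∈ s}) := by
  rw [isI_cons] at hi hj
  obtain ⟨i1, i2, i3⟩ := hi
  obtain ⟨j1, -, j3⟩ := hj
  have hset : {x | x ∈ i ::ₘ s} = insert i {x | x ∈ s} := by ext x; simp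
  have hmem : ∀ x, x ∈ M.E := by simp [hE]
  have key : isI M (j ::ₘ i ::ₘ s) ↔ j ∉ M.closure (insert i {x | x ∈ s}) := by
    rw [isI_cons, hset, i3.notMem_closure_iff (hmem j)]
    constructor
    · rintro ⟨a, b, c⟩
      exact ⟨c, by simpa using a⟩
    · rintro ⟨a, b⟩
      exact ⟨by simpa using b, Multiset.nodup_cons.2 ⟨i1, i2⟩, a⟩
  rw [key, not_iff_not]
  constructor
  · intro h
    have hs : M.closure (insert j {x | x ∈ s}) ⊆ M.closure (insert i {x | x ∈ s}) := by
      apply M.closure_subset_closure_of_subset_closure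
      rintro x (rfl | hx)
      · exact h
      · exact M.mem_closure_of_mem (Set.mem_insert_of_mem _ hx) i3.subset_ground
    refine le_antisymm ?_ hs
    apply M.closure_subset_closure_of_subset_closure
    have hii : i ∈ M.closure (insert j {x | x ∈ s}) := by
      have hsI : M.Indep {x | x ∈ s} := i3.subset (Set.subset_insert _ _)
      have hjs : j ∉ M.closure {x | x ∈ s} := by
        rw [hsI.notMem_closure_iff (hmem j)]; exact ⟨j3, j1⟩
      exact (M.closure_exchange ⟨h, hjs⟩).1
    rintro x (rfl | hx)
    · exact hii
    · exact M.mem_closure_of_mem (Set.mem_insert_of_mem _ hx) j3.subset_ground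
  · intro h
    rw [h]
    exact M.mem_closure_of_mem (Set.mem_insert _ _) j3.subset_ground

open Classical in
lemma hyp_base {α : Type*} [Fintype α] (M : Matroid α) (hE : M.E = Set.univ) {ε : ℝ} (hε : 0 < ε)
    (s : Multiset α) (v : Option α → ℝ) :
    (∑ i, v i * ∑ j, GG M ε 0 (act i (act j s)) * v j) *
      (∑ i, wt ε i * ∑ j, GG M ε 0 (act i (act j s)) * wt ε j)
      ≤ (∑ i, v i * ∑ j, GG M ε 0 (act i (act j s)) * wt ε j) ^ 2 := by
  by_cases hs : isI M s
  swap
  · have : ∀ i j, GG M ε 0 (act i (act j s)) = 0 := fun i j =>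
      GG_zero M ε 0 _ fun h => hs (isI_of_act M _ _ (isI_of_act M _ _ h))
    simp [this]
  have hsym : ∀ i j, GG M ε 0 (act i (act j s)) = GG M ε 0 (act j (act i s)) := fun i j => by
    rw [act_comm]
  set l : Option α → ℝ := fun a => if isI M (act a s) then 1 else 0 with hl
  have hlo : l none = 1 := if_pos hs
  have hl0 : ∀ a, 0 ≤ l a := fun a => by simp only [hl]; split_ifs <;> norm_num
  set L : ℝ := ∑ a, l a * wt ε a with hL
  have hLpos : 0 < L := by
    refine Finset.sum_pos' (fun a _ => mul_nonneg (hl0 a) (wt_nonneg hε.le a))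
      ⟨none, Finset.mem_univ _, ?_⟩
    rw [hlo, one_mul]; exact hε
  refine hyp_of_le (fun i j => GG M ε 0 (act i (act j s))) hsym (wt ε) v
    ((∑ a, l a * v a) / L) ?_ ?_
  · exact Finset.sum_nonneg fun i _ => mul_nonneg (wt_nonneg hε.le i)
      (Finset.sum_nonneg fun j _ => mul_nonneg (GG_nonneg M hε.le 0 _) (wt_nonneg hε.le j))
  set w : Option α → ℝ := fun i => v i - (∑ a, l a * v a) / L * wt ε i with hw
  have hlw : ∑ a, l a * w a = 0 := by
    have : ∀ a, l a * w a = l a * v a - (∑ a, l a * v a) / L * (l a * wt ε a) := fun a => by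
      simp only [hw]; ring
    simp only [this, Finset.sum_sub_distrib, ← Finset.mul_sum]
    rw [← hL]; field_simp; simp
  change ∑ i, w i * ∑ j, GG M ε 0 (act i (act j s)) * w j ≤ 0
  set φ : α → Set α := fun i => M.closure (insert i {x | x ∈ s}) with hφ
  have hGl : ∀ a b, GG M ε 0 (act a (act b s)) ≠ 0 → l a = 1 ∧ l b = 1 := by
    intro a b h
    have h1 : isI M (act a (act b s)) := by
      by_contra h'; exact h (GG_zero M ε 0 _ h')
    have h2 := h1
    rw [act_comm] at h2
    simp only [hl, if_pos (isI_of_act M _ _ h1), if_pos (isI_of_act M _ _ h2), and_self]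
  have hss : ∀ i j, GG M ε 0 (act (some i) (act (some j) s))
      = l (some i) * l (some j) - if φ i = φ j then l (some i) * l (some j) else 0 := by
    intro i j
    by_cases hi : isI M (i ::ₘ s)
    · by_cases hj : isI M (j ::ₘ s)
      · have := isI_two M hE s j i hj hi
        by_cases hc : φ i = φ j
        · rw [if_pos hc, sub_self]
          apply GG_zero
          intro h
          exact this.1 h hc.symm
        · rw [if_neg hc, sub_zero]
          have h3 := this.2 (Ne.symm hc)
          have g1 : GG M ε 0 (act (some i) (act (some j) s)) = 1 := if_pos h3
          have g2 : l (some i) = 1 := if_pos hi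
          have g3 : l (some j) = 1 := if_pos hj
          rw [g1, g2, g3, mul_one]
      · have h0 : l (some j) = 0 := if_neg hj
        rw [h0]
        simp only [mul_zero, ite_self, sub_zero]
        by_contra h
        rw [(hGl _ _ h).2] at h0; norm_num at h0
    · have h0 : l (some i) = 0 := if_neg hi
      rw [h0]
      simp only [zero_mul, ite_self, sub_zero]
      by_contra h
      rw [(hGl _ _ h).1] at h0; norm_num at h0
  have hno : ∀ a, GG M ε 0 (act none (act a s)) = l a := fun a => rfl
  have hon : ∀ a, GG M ε 0 (act a (act none s)) = l a := fun a => rfl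
  have hps := fiber_psd φ (fun i => l (some i) * w (some i))
  have e : ∑ i, w i * ∑ j, GG M ε 0 (act i (act j s)) * w j
      = (∑ a, l a * w a) * (∑ a, l a * w a)
        - ∑ i, ∑ j, (if φ i = φ j then (l (some i) * w (some i)) * (l (some j) * w (some j)) else 0) := by
    have e1 : ∀ i j, (if φ i = φ j then (l (some i) * w (some i)) * (l (some j) * w (some j)) else 0)
      = (l (some i) * w (some i)) * (l (some j) * w (some j))
        - w (some i) * (GG M ε 0 (act (some i) (act (some j) s)) * w (some j)) := by
      intro i j
      rw [hss]
      split_ifs <;> ring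
    simp only [e1, Finset.sum_sub_distrib, Fintype.sum_option, hno, hon, hlo,
      ← Finset.mul_sum, ← Finset.sum_mul, mul_add, Finset.sum_add_distrib]
    have e2 : ∑ x, w (some x) * (l (some x) * w none) = (∑ x, l (some x) * w (some x)) * w none := by
      rw [Finset.sum_mul]; exact Finset.sum_congr rfl fun _ _ => by ring
    rw [e2]
    ring
  rw [e, hlw]
  linarith

lemma hyp_all {α : Type*} [Fintype α] (M : Matroid α) (hE : M.E = Set.univ) {ε : ℝ} (hε : 0 < ε)
    (m : ℕ) : ∀ (s : Multiset α) (v : Option α → ℝ),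
    (∑ i, v i * ∑ j, GG M ε m (act i (act j s)) * v j) *
      (∑ i, wt ε i * ∑ j, GG M ε m (act i (act j s)) * wt ε j)
      ≤ (∑ i, v i * ∑ j, GG M ε m (act i (act j s)) * wt ε j) ^ 2 := by
  induction m with
  | zero => exact hyp_base M hE hε
  | succ m ih =>
    intro s v
    refine hyp_step (fun i j => GG M ε (m + 1) (act i (act j s)))
      (fun c i j => GG M ε m (act i (act j (act c s)))) (fun i j => by rw [act_comm])
      (fun c i j => GG_nonneg M hε.le m _) (wt ε) (wt_pos hε) none ?_ ?_ ?_ (fun c => ih (act c s)) v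
    · intro i hi
      apply GG_pos M hε
      by_contra h
      refine hi.ne' (Finset.sum_eq_zero fun j _ => ?_)
      rw [GG_zero, zero_mul]
      intro h'
      rw [act_comm] at h'
      exact h (isI_of_act M _ _ h')
    · intro i j
      simp only [GG]
      refine Finset.sum_congr rfl fun c _ => ?_
      rw [act_comm c i, act_comm c j]
    · intro i j
      simp only [GG]
      refine Finset.sum_congr rfl fun c _ => ?_
      rw [mul_comm, act_comm c i, act_comm c j, act_comm i j, act_comm i c, act_comm j c]

lemma GG_logconc {α : Type*} [Fintype α] (M : Matroid α) (hE : M.E = Set.univ) {ε : ℝ} (hε : 0 < ε)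
    (m : ℕ) (s : Multiset α) : GG M ε m s * GG M ε (m + 2) s ≤ GG M ε (m + 1) s ^ 2 := by
  classical
  have := hyp_all M hE hε m s (fun a => if a = none then 1 else 0)
  simp only [ite_mul, one_mul, zero_mul, mul_ite, mul_one, mul_zero, Finset.sum_ite_eq',
    Finset.mem_univ, if_true] at this
  have e1 : ∀ n t, ∑ j, GG M ε n (act j t) * wt ε j = GG M ε (n + 1) t := by
    intro n t
    simp only [GG]
    exact Finset.sum_congr rfl fun j _ => mul_comm _ _
  have e2 : ∑ i, wt ε i * ∑ j, GG M ε m (act i (act j s)) * wt ε j = GG M ε (m + 2) s := by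
    rw [← e1]
    refine Finset.sum_congr rfl fun i _ => ?_
    rw [← e1, mul_comm]
    congr 1
    exact Finset.sum_congr rfl fun j _ => by rw [act_comm]
  rw [e2] at this
  have e3 : ∑ j, GG M ε m (act none (act j s)) * wt ε j = GG M ε (m + 1) s := e1 m s
  rw [e3] at this
  exact this

lemma GG_cont {α : Type*} [Fintype α] (M : Matroid α) (m : ℕ) :
    ∀ s, Continuous fun ε => GG M ε m s := by
  induction m with
  | zero => intro s; simp only [GG]; exact continuous_const
  | succ m ih =>
    intro s
    simp only [GG]
    refine continuous_finsetSum _ fun c _ => Continuous.mul ?_ (ih _)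
    cases c
    · exact continuous_id
    · exact continuous_const

lemma GG_logconc0 {α : Type*} [Fintype α] (M : Matroid α) (hE : M.E = Set.univ)
    (m : ℕ) (s : Multiset α) : GG M 0 m s * GG M 0 (m + 2) s ≤ GG M 0 (m + 1) s ^ 2 := by
  have t1 : Filter.Tendsto (fun ε => GG M ε m s * GG M ε (m + 2) s) (nhdsWithin 0 (Set.Ioi 0))
      (nhds (GG M 0 m s * GG M 0 (m + 2) s)) :=
    (((GG_cont M m s).mul (GG_cont M (m + 2) s)).tendsto 0).mono_left nhdsWithin_le_nhds
  have t2 : Filter.Tendsto (fun ε => GG M ε (m + 1) s ^ 2) (nhdsWithin 0 (Set.Ioi 0))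
      (nhds (GG M 0 (m + 1) s ^ 2)) :=
    (((GG_cont M (m + 1) s).pow 2).tendsto 0).mono_left nhdsWithin_le_nhds
  refine le_of_tendsto_of_tendsto t1 t2 ?_
  filter_upwards [self_mem_nhdsWithin] with ε hε
  exact GG_logconc M hE hε m s

open Classical in
lemma GG_count {α : Type*} [Fintype α] (M : Matroid α) (k : ℕ) : ∀ s : Multiset α,
    GG M 0 k s = (k.factorial : ℝ) *
      ((Finset.univ.powersetCard k).filter fun T : Finset α => isI M (T.val + s)).card := by
  induction k with
  | zero =>
    intro s
    simp only [GG, Finset.powersetCard_zero, Finset.filter_singleton]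
    split_ifs with h1 h2 h2 <;> simp_all
  | succ k ih =>
    intro s
    simp only [GG, Fintype.sum_option, wt, zero_mul, one_mul, zero_add, act, ih]
    rw [← Finset.mul_sum, ← Nat.cast_sum]
    have key : ∑ i, ((Finset.univ.powersetCard k).filter
          fun T : Finset α => isI M (T.val + i ::ₘ s)).card
        = (k + 1) * ((Finset.univ.powersetCard (k + 1)).filter
          fun T : Finset α => isI M (T.val + s)).card := by
      have e : ∀ T ∈ (Finset.univ.powersetCard (k + 1)).filter
          (fun T : Finset α => isI M (T.val + s)), T.card = k + 1 := by
        intro T hT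
        exact (Finset.mem_powersetCard.1 (Finset.mem_filter.1 hT).1).2
      rw [mul_comm, ← smul_eq_mul, ← Finset.sum_const, ← Finset.sum_congr rfl e,
        ← Finset.card_sigma, ← Finset.card_sigma]
      have hni : ∀ (i : α) (T : Finset α), isI M (T.val + i ::ₘ s) → i ∉ T := by
        intro i T h hi
        have h1 := h.1
        rw [Multiset.nodup_add] at h1
        exact Multiset.disjoint_left.1 h1.2.2 hi (Multiset.mem_cons_self _ _)
      refine Finset.card_bij' (fun p _ => ⟨insert p.1 p.2, p.1⟩) (fun p _ => ⟨p.2, p.1.erase p.2⟩)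
        ?_ ?_ ?_ ?_
      · rintro ⟨i, T⟩ h
        simp only [Finset.mem_sigma, Finset.mem_filter, Finset.mem_powersetCard,
          Finset.mem_univ, true_and, Finset.subset_univ] at h ⊢
        have hi := hni i T h.2
        refine ⟨⟨?_, ?_⟩, Finset.mem_insert_self _ _⟩
        · rw [Finset.card_insert_of_notMem hi, h.1]
        · rw [Finset.insert_val_of_notMem hi, Multiset.cons_add, ← Multiset.add_cons]
          exact h.2
      · rintro ⟨T, i⟩ h
        simp only [Finset.mem_sigma, Finset.mem_filter, Finset.mem_powersetCard,
          Finset.mem_univ, true_and, Finset.subset_univ] at h ⊢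
        obtain ⟨⟨h1, h2⟩, h3⟩ := h
        refine ⟨?_, ?_⟩
        · rw [Finset.card_erase_of_mem h3, h1]; rfl
        · rw [Finset.erase_val, Multiset.add_cons, ← Multiset.cons_add, Multiset.cons_erase h3]
          exact h2
      · rintro ⟨i, T⟩ h
        simp only [Finset.mem_sigma, Finset.mem_filter, Finset.mem_powersetCard,
          Finset.mem_univ, true_and, Finset.subset_univ] at h
        have hi := hni i T h.2
        simp [Finset.erase_insert hi]
      · rintro ⟨T, i⟩ h
        simp only [Finset.mem_sigma, Finset.mem_filter] at h
        simp [Finset.insert_erase h.2]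
    rw [key, Nat.factorial_succ]
    push_cast
    ring

lemma GG_numIndep {α : Type*} [Fintype α] (M : Matroid α) (k : ℕ) :
    GG M 0 k 0 = (k.factorial : ℝ) * numIndep M k := by
  classical
  rw [GG_count]
  congr 2
  rw [numIndep, ← Set.ncard_coe_finset]
  refine Set.ncard_congr (fun T _ => (T : Set α)) ?_ ?_ ?_
  · intro T hT
    simp only [Finset.coe_filter, Finset.mem_powersetCard, Set.mem_ofPred_eq, isI, add_zero] at hT
    exact ⟨hT.2.2, by rw [Set.ncard_coe_finset]; exact hT.1.2⟩
  · intro T T' _ _ h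
    exact Finset.coe_injective h
  · rintro S ⟨h1, h2⟩
    refine ⟨S.toFinset, ?_, by simp⟩
    simp only [Finset.coe_filter, Finset.mem_powersetCard, Set.mem_ofPred_eq, isI, add_zero]
    refine ⟨⟨Finset.subset_univ _, ?_⟩, Finset.nodup _, ?_⟩
    · rw [← h2, Set.ncard_eq_toFinset_card']
    · simpa using h1

/-- Log-concavity for matroids (weak Mason conjecture). -/
theorem stmt_4 {α : Type*} [Fintype α] (M : Matroid α) (hE : M.E = Set.univ)
    (k : ℕ) (hk : 1 ≤ k) (hk' : k < matroidRk M) :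
    ((numIndep M k : ℝ)) ^ 2 ≥
      (1 + 1 / (k : ℝ)) * (numIndep M (k - 1) : ℝ) * (numIndep M (k + 1) : ℝ) := by
  obtain ⟨m, rfl⟩ : ∃ m, k = m + 1 := ⟨k - 1, by omega⟩
  have h := GG_logconc0 M hE m 0
  simp only [GG_numIndep] at h
  simp only [Nat.add_sub_cancel]
  have hf : (0 : ℝ) < m.factorial := by exact_mod_cast m.factorial_pos
  simp only [Nat.factorial_succ] at h
  push_cast at h ⊢
  set f : ℝ := (m.factorial : ℝ)
  have hm : (0 : ℝ) < (m : ℝ) + 1 := by positivity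
  have e : (1 + 1 / ((m : ℝ) + 1)) = (m + 2) / (m + 1) := by field_simp; ring
  rw [e, ge_iff_le, div_mul_eq_mul_div, div_mul_eq_mul_div, div_le_iff₀ hm]
  have hp : 0 < f ^ 2 * ((m : ℝ) + 1) := by positivity
  refine le_of_mul_le_mul_left ?_ hp
  have e1 : (m : ℝ) + 1 + 1 = m + 2 := by ring
  nlinarith [h]
end

section
/- (Ultra-log-concavity for matroids / strong Mason conjecture.) Let M be a matroid on a finite ground set X with |X| = n, and let k be an integer with 1 ≤ k < rk(M). Then I(k)² ≥ (1 + 1/k) · (1 + 1/(n−k)) · I(k−1) · I(k+1). -/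
lemma hyp_of_perp {ι : Type*} [Fintype ι] (H : ι → ι → ℝ) (hs : ∀ i j, H i j = H j i)
    (l : (ι → ℝ) → ℝ) (hl : ∀ (a b : ℝ) (u v : ι → ℝ), l (fun i => a * u i + b * v i) = a * l u + b * l v)
    (p : ι → ℝ)
    (hc : l p = 0 → ∑ i, ∑ j, p i * p j * H i j ≤ 0)
    (hc0 : 0 ≤ ∑ i, ∑ j, p i * p j * H i j)
    (h : ∀ v, l v = 0 → ∑ i, ∑ j, v i * v j * H i j ≤ 0) (v : ι → ℝ) :
    (∑ i, ∑ j, v i * v j * H i j) * (∑ i, ∑ j, p i * p j * H i j) ≤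
      (∑ i, ∑ j, v i * p j * H i j) ^ 2 := by
  have key := h (fun i => l p * v i + (- l v) * p i) (by rw [hl]; ring)
  have e : ∑ i, ∑ j, (l p * v i + (- l v) * p i) * (l p * v j + (- l v) * p j) * H i j
      = (l p)^2 * (∑ i, ∑ j, v i * v j * H i j) - 2 * l p * l v * (∑ i, ∑ j, v i * p j * H i j)
        + (l v)^2 * (∑ i, ∑ j, p i * p j * H i j) := by
    have e2 : ∑ i, ∑ j, v i * p j * H i j = ∑ i, ∑ j, p i * v j * H i j := by
      rw [Finset.sum_comm]
      refine Finset.sum_congr rfl fun i _ => Finset.sum_congr rfl fun j _ => ?_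
      rw [hs i j]; ring
    have : ∀ X : ℝ, 2 * l p * l v * X = l p * l v * X + l p * l v * X := by intro X; ring
    rw [this]
    nth_rewrite 2 [e2]
    simp only [Finset.mul_sum, ← Finset.sum_add_distrib, ← Finset.sum_sub_distrib]
    refine Finset.sum_congr rfl fun i _ => Finset.sum_congr rfl fun j _ => ?_
    ring
  rw [e] at key
  set b := ∑ i, ∑ j, v i * v j * H i j
  set c := ∑ i, ∑ j, p i * p j * H i j
  set x := ∑ i, ∑ j, v i * p j * H i j
  by_cases hlp : l p = 0
  · have : c = 0 := le_antisymm (hc hlp) hc0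
    rw [this]; nlinarith [sq_nonneg x]
  · have hpos : 0 < (l p)^2 := by positivity
    by_contra hcon
    push Not at hcon
    have h1 := mul_nonpos_of_nonneg_of_nonpos hc0 key
    have h2 : 0 < (l p)^2 * (b * c - x^2) := mul_pos hpos (by linarith)
    nlinarith [sq_nonneg (l v * c - l p * x)]

lemma spectral_neg {ι : Type*} [Fintype ι] (A : ι → ι → ℝ) (hs : ∀ i j, A i j = A j i) (y : ι → ℝ)
    (h : ∀ (u : ι → ℝ) (μ : ℝ), 0 < μ → (∀ i, ∑ j, A i j * u j = μ * u i) → ∑ i, u i * y i = 0) :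
    ∑ i, ∑ j, y i * y j * A i j ≤ 0 := by
  classical
  have hA : (Matrix.of A).IsHermitian := by
    ext i j; simp [hs j i]
  let b := hA.eigenvectorBasis
  have hb : ∀ k i, ∑ j, A i j * b k j = hA.eigenvalues k * b k i := by
    intro k i
    have := congrFun (hA.mulVec_eigenvectorBasis k) i
    simpa [Matrix.mulVec, dotProduct] using this
  have e : ∑ i, ∑ j, y i * y j * A i j = ∑ k, hA.eigenvalues k * (∑ i, b k i * y i)^2 := by
    have h1 := b.sum_inner_mul_inner (WithLp.toLp 2 y) (WithLp.toLp 2 (fun i => ∑ j, A i j * y j))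
    have h2 : inner ℝ (WithLp.toLp 2 y) (WithLp.toLp 2 (fun i => ∑ j, A i j * y j)) = ∑ i, ∑ j, y i * y j * A i j := by
      simp only [PiLp.inner_apply, RCLike.inner_apply, conj_trivial, Finset.sum_mul]
      refine Finset.sum_congr rfl fun i _ => Finset.sum_congr rfl fun j _ => ?_
      ring
    rw [← h2, ← h1]
    refine Finset.sum_congr rfl fun k _ => ?_
    have h3 : inner ℝ (WithLp.toLp 2 y) (b k) = ∑ i, b k i * y i := by
      simp only [PiLp.inner_apply, RCLike.inner_apply, conj_trivial]
    have h4 : inner ℝ (b k) (WithLp.toLp 2 (fun i => ∑ j, A i j * y j)) = hA.eigenvalues k * ∑ i, b k i * y i := by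
      simp only [PiLp.inner_apply, RCLike.inner_apply, conj_trivial, Finset.mul_sum, Finset.sum_mul]
      rw [Finset.sum_comm]
      refine Finset.sum_congr rfl fun i _ => ?_
      rw [← mul_assoc, ← hb, Finset.sum_mul]
      refine Finset.sum_congr rfl fun j _ => ?_
      rw [hs i j]; ring
    rw [h3, h4]; ring
  rw [e]
  refine Finset.sum_nonpos fun k _ => ?_
  rcases lt_or_ge 0 (hA.eigenvalues k) with hk | hk
  · rw [h (b k) _ hk (hb k)]; simp
  · exact mul_nonpos_of_nonpos_of_nonneg hk (sq_nonneg _)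

lemma linalg {ι : Type*} [Fintype ι] (H : ι → ι → ℝ) (hs : ∀ i j, H i j = H j i)
    (hn : ∀ i j, 0 ≤ H i j) (p : ι → ℝ) (hp : ∀ i, 0 < p i) (w : ι)
    (hw : ∀ i j, 0 < H i j → 0 < H w i)
    (hstar : ∀ v : ι → ℝ, ∑ i, ∑ j, v i * v j * H i j ≤
      ∑ i, p i * (∑ j, H i j * v j) ^ 2 / (∑ j, H i j * p j)) (v : ι → ℝ) :
    (∑ i, ∑ j, v i * v j * H i j) * (∑ i, ∑ j, p i * p j * H i j) ≤
      (∑ i, ∑ j, v i * p j * H i j) ^ 2 := by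
  set q : ι → ℝ := fun i => ∑ j, H i j * p j with hq
  have hq0 : ∀ i, 0 ≤ q i := fun i => Finset.sum_nonneg fun j _ => mul_nonneg (hn i j) (hp j).le
  have hH0 : ∀ i, q i = 0 → ∀ j, H i j = 0 := by
    intro i hi j
    have := (Finset.sum_eq_zero_iff_of_nonneg (fun j _ => mul_nonneg (hn i j) (hp j).le)).1 hi j (Finset.mem_univ _)
    rcases mul_eq_zero.1 this with h | h
    · exact h
    · exact absurd h (hp j).ne'
  have hwq : ∀ i, 0 < q i → 0 < H w i := by
    intro i hi
    by_contra hcon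
    have : ∀ j, H i j = 0 := fun j => le_antisymm (not_lt.1 fun h => hcon (hw i j h)) (hn i j)
    simp [hq, this] at hi
  have hpq : ∑ i, ∑ j, p i * p j * H i j = ∑ i, q i * p i := by
    refine Finset.sum_congr rfl fun i _ => ?_
    rw [hq, Finset.sum_mul]
    exact Finset.sum_congr rfl fun j _ => by ring
  refine hyp_of_perp H hs (fun v => ∑ i, q i * v i) ?_ p ?_ ?_ ?_ v
  · intro a b u v
    simp only [Finset.mul_sum, ← Finset.sum_add_distrib]
    exact Finset.sum_congr rfl fun j _ => by ring
  · intro h; rw [hpq]; exact h.le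
  · rw [hpq]; exact Finset.sum_nonneg fun i _ => mul_nonneg (hq0 i) (hp i).le
  intro x hx
  set s : ι → ℝ := fun i => √(p i / q i) with hsdef
  set r : ι → ℝ := fun i => √(q i / p i) with hrdef
  have hs2 : ∀ i, s i ^ 2 = p i / q i := fun i => Real.sq_sqrt (div_nonneg (hp i).le (hq0 i))
  have hr2 : ∀ i, r i ^ 2 = q i / p i := fun i => Real.sq_sqrt (div_nonneg (hq0 i) (hp i).le)
  have hsr : ∀ i, 0 < q i → s i * r i = 1 := by
    intro i hi
    have := hp i
    rw [hsdef, hrdef, ← Real.sqrt_mul (by positivity)]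
    field_simp; simp
  have hs0 : ∀ i, q i = 0 → s i = 0 := by intro i hi; simp [hsdef, hi]
  have hxx : ∑ i, ∑ j, x i * x j * H i j =
      ∑ i, ∑ j, (r i * x i) * (r j * x j) * (s i * H i j * s j) := by
    refine Finset.sum_congr rfl fun i _ => Finset.sum_congr rfl fun j _ => ?_
    rcases (hq0 i).eq_or_lt with hi | hi
    · rw [hH0 i hi.symm j]; ring
    rcases (hq0 j).eq_or_lt with hj | hj
    · rw [hs i j, hH0 j hj.symm i]; ring
    linear_combination (-(x i * x j * H i j * s j * r j)) * hsr i hi - x i * x j * H i j * hsr j hj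
  rw [hxx]
  refine spectral_neg (fun i j => s i * H i j * s j) (fun i j => by rw [hs i j]; ring) (fun i => r i * x i) ?_
  intro u μ hμ hu
  set v : ι → ℝ := fun i => s i * u i with hv
  have hu0 : ∀ i, q i = 0 → u i = 0 := by
    intro i hi
    have := hu i
    simp [hs0 i hi] at this
    rcases this with h | h
    · exact absurd h hμ.ne'
    · exact h
  have hu' : ∀ i, s i * (∑ j, H i j * v j) = μ * u i := by
    intro i
    rw [← hu i, Finset.mul_sum]
    exact Finset.sum_congr rfl fun j _ => by rw [hv]; ring
  have hvv : ∑ i, ∑ j, v i * v j * H i j = μ * ∑ i, u i ^ 2 := by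
    rw [Finset.mul_sum]
    refine Finset.sum_congr rfl fun i _ => ?_
    have : ∑ j, v i * v j * H i j = u i * (s i * (∑ j, H i j * v j)) := by
      rw [Finset.mul_sum, Finset.mul_sum]
      exact Finset.sum_congr rfl fun j _ => by rw [hv]; ring
    rw [this, hu' i]; ring
  have hst : ∑ i, p i * (∑ j, H i j * v j) ^ 2 / q i = μ^2 * ∑ i, u i ^ 2 := by
    rw [Finset.mul_sum]
    refine Finset.sum_congr rfl fun i _ => ?_
    rw [← mul_pow, ← hu' i, mul_pow, hs2]; ring
  have hle := hstar v
  rw [hvv, hst] at hle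
  have hper : ∑ i, ∑ j, H i j * p i * p j * (v i / p i - v j / p j)^2 = 2 * ∑ i, u i ^2 - 2 * (μ * ∑ i, u i ^ 2) := by
    rw [← hvv]
    have e1 : ∑ i, u i ^ 2 = ∑ i, ∑ j, H i j * p j * (v i ^ 2 / p i) := by
      refine Finset.sum_congr rfl fun i _ => ?_
      rw [← Finset.sum_mul]
      change _ = q i * _
      rcases (hq0 i).eq_or_lt with hi | hi
      · rw [hu0 i hi.symm, ← hi]; ring
      · have := hp i
        rw [hv]; simp only; rw [mul_pow, hs2]; field_simp
    have e2 : ∑ i, u i ^ 2 = ∑ i, ∑ j, H i j * p i * (v j ^ 2 / p j) := by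
      rw [e1, Finset.sum_comm]
      refine Finset.sum_congr rfl fun i _ => Finset.sum_congr rfl fun j _ => ?_
      rw [hs i j]
    have : 2 * ∑ i, u i ^2 = ∑ i, u i ^2 + ∑ i, u i ^2 := by ring
    rw [this]
    nth_rewrite 1 [e1]
    rw [e2]
    simp only [Finset.mul_sum, ← Finset.sum_add_distrib, ← Finset.sum_sub_distrib]
    refine Finset.sum_congr rfl fun i _ => Finset.sum_congr rfl fun j _ => ?_
    have := hp i
    have := hp j
    field_simp
    ring
  have hU : 0 ≤ ∑ i, u i ^ 2 := Finset.sum_nonneg fun i _ => sq_nonneg _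
  have hterm : ∀ i j, 0 ≤ H i j * p i * p j * (v i / p i - v j / p j)^2 := fun i j => by
    have := hp i
    have := hp j
    have := hn i j
    positivity
  have hz : ∑ i, ∑ j, H i j * p i * p j * (v i / p i - v j / p j)^2 = 0 := by
    refine le_antisymm ?_ (Finset.sum_nonneg fun i _ => Finset.sum_nonneg fun j _ => hterm i j)
    rw [hper]
    have : μ * ∑ i, u i ^ 2 ≤ μ * (μ * ∑ i, u i ^ 2) := by linarith
    have := le_of_mul_le_mul_left this hμ
    linarith
  have hz' : ∀ i, 0 < q i → v i = v w / p w * p i := by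
    intro i hi
    have h1 := (Finset.sum_eq_zero_iff_of_nonneg (fun i _ => Finset.sum_nonneg fun j _ => hterm i j)).1 hz w (Finset.mem_univ _)
    have h2 := (Finset.sum_eq_zero_iff_of_nonneg (fun j _ => hterm w j)).1 h1 i (Finset.mem_univ _)
    have := hwq i hi
    have := hp i
    have := hp w
    have h3 : (v w / p w - v i / p i)^2 = 0 := by
      rcases mul_eq_zero.1 h2 with h | h
      · exact absurd h (by positivity)
      · exact h
    have h4 : v w / p w = v i / p i := by
      have := pow_eq_zero_iff (two_ne_zero) |>.1 h3
      linarith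
    rw [h4]; field_simp
  have : ∑ i, u i * (r i * x i) = v w / p w * ∑ i, q i * x i := by
    rw [Finset.mul_sum]
    refine Finset.sum_congr rfl fun i _ => ?_
    rcases (hq0 i).eq_or_lt with hi | hi
    · rw [hu0 i hi.symm, ← hi]; ring
    · have h1 : u i = r i * v i := by
        rw [hv]; linear_combination (- u i) * hsr i hi
      rw [h1, hz' i hi]
      have := hp i
      have h2 : r i * r i = q i / p i := by rw [← hr2 i]; ring
      calc _ = (r i * r i) * (v w / p w * p i) * x i := by ring
        _ = _ := by rw [h2]; field_simp
  rw [this]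
  rw [hx]; ring

lemma hyp_induction {ι : Type*} [Fintype ι] (c : Multiset ι → ℝ) (hc : ∀ m, 0 ≤ c m)
    (p : ι → ℝ) (hp : ∀ i, 0 < p i) (w : ι) (n : ℕ)
    (euler : ∀ m : Multiset ι, ∑ i, p i * c (i ::ₘ m) = ((n : ℝ) - m.card) * c m)
    (hw : ∀ (m : Multiset ι) (j : ι), m.card < n → 0 < c (j ::ₘ m) → 0 < c (w ::ₘ m))
    (base : ∀ m : Multiset ι, m.card + 2 = n → ∀ v : ι → ℝ,
      (∑ i, ∑ j, v i * v j * c (i ::ₘ j ::ₘ m)) * (∑ i, ∑ j, p i * p j * c (i ::ₘ j ::ₘ m)) ≤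
      (∑ i, ∑ j, v i * p j * c (i ::ₘ j ::ₘ m)) ^ 2) (d : ℕ) :
    ∀ m : Multiset ι, m.card + 2 + d = n → ∀ v : ι → ℝ,
      (∑ i, ∑ j, v i * v j * c (i ::ₘ j ::ₘ m)) * (∑ i, ∑ j, p i * p j * c (i ::ₘ j ::ₘ m)) ≤
      (∑ i, ∑ j, v i * p j * c (i ::ₘ j ::ₘ m)) ^ 2 := by
  induction d with
  | zero => exact fun m hm => base m hm
  | succ d ih =>
    intro m hm v
    have hN : (0 : ℝ) < d + 1 := by positivity
    have eul2 : ∀ i j, ∑ k, p k * c (k ::ₘ i ::ₘ j ::ₘ m) = (d + 1) * c (i ::ₘ j ::ₘ m) := by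
      intro i j
      rw [euler, ← hm]
      simp only [Multiset.card_cons]
      push_cast; ring
    refine linalg (fun i j => c (i ::ₘ j ::ₘ m)) (fun i j => by rw [Multiset.cons_swap])
      (fun i j => hc _) p hp w ?_ ?_ v
    · intro i j hij
      refine hw (i ::ₘ m) j (by simp only [Multiset.card_cons]; omega) ?_
      rwa [Multiset.cons_swap]
    intro v
    have hdec : (d + 1) * ∑ i, ∑ j, v i * v j * c (i ::ₘ j ::ₘ m) =
        ∑ k, p k * ∑ i, ∑ j, v i * v j * c (i ::ₘ j ::ₘ k ::ₘ m) := by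
      simp only [Finset.mul_sum]
      rw [Finset.sum_comm]
      conv_rhs => rw [Finset.sum_comm]
      rw [Finset.sum_comm]
      refine Finset.sum_congr rfl fun i _ => ?_
      conv_rhs => rw [Finset.sum_comm]
      refine Finset.sum_congr rfl fun j _ => ?_
      have := eul2 i j
      calc _ = v i * v j * ((d + 1) * c (i ::ₘ j ::ₘ m)) := by ring
        _ = _ := by
          rw [← this, Finset.mul_sum]
          refine Finset.sum_congr rfl fun k _ => ?_
          rw [Multiset.cons_swap k i, Multiset.cons_swap k j]; ring
    refine le_of_mul_le_mul_left ?_ hN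
    rw [hdec, Finset.mul_sum]
    refine Finset.sum_le_sum fun k _ => ?_
    set q := ∑ j, c (k ::ₘ j ::ₘ m) * p j with hq
    have hq0 : 0 ≤ q := Finset.sum_nonneg fun j _ => mul_nonneg (hc _) (hp j).le
    have hvp : ∀ u : ι → ℝ, ∑ i, ∑ j, u i * p j * c (i ::ₘ j ::ₘ k ::ₘ m) =
        (d + 1) * ∑ j, c (k ::ₘ j ::ₘ m) * u j := by
      intro u
      rw [Finset.mul_sum]
      refine Finset.sum_congr rfl fun i _ => ?_
      calc _ = u i * ((d + 1) * c (k ::ₘ i ::ₘ m)) := by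
            rw [← eul2, Finset.mul_sum]
            refine Finset.sum_congr rfl fun j _ => ?_
            rw [Multiset.cons_swap i j, Multiset.cons_swap i k]; ring
        _ = _ := by ring
    rcases hq0.eq_or_lt with h0 | h0
    · have hz : ∀ i j, c (i ::ₘ j ::ₘ k ::ₘ m) = 0 := by
        intro i j
        have h1 := (Finset.sum_eq_zero_iff_of_nonneg (fun j _ => mul_nonneg (hc _) (hp j).le)).1 h0.symm j (Finset.mem_univ _)
        have h2 : c (j ::ₘ k ::ₘ m) = 0 := by
          rw [Multiset.cons_swap]
          rcases mul_eq_zero.1 h1 with h | h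
          · exact h
          · exact absurd h (hp j).ne'
        have h3 := eul2 j k
        rw [h2, mul_zero] at h3
        have h4 := (Finset.sum_eq_zero_iff_of_nonneg (fun j _ => mul_nonneg (hp j).le (hc _))).1 h3 i (Finset.mem_univ _)
        rcases mul_eq_zero.1 h4 with h | h
        · exact absurd h (hp i).ne'
        · exact h
      simp only [hz]
      rw [← h0]; simp
    · have := ih (k ::ₘ m) (by simp only [Multiset.card_cons]; omega) v
      rw [hvp, hvp] at this
      have h1 : (∑ i, ∑ j, v i * v j * c (i ::ₘ j ::ₘ k ::ₘ m)) * q ≤ (d + 1) * (∑ j, c (k ::ₘ j ::ₘ m) * v j) ^ 2 := by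
        refine le_of_mul_le_mul_left ?_ hN
        calc _ = (∑ i, ∑ j, v i * v j * c (i ::ₘ j ::ₘ k ::ₘ m)) * ((d + 1) * q) := by ring
          _ ≤ _ := this
          _ = _ := by ring
      rw [← le_div_iff₀ h0] at h1
      calc _ ≤ p k * ((d + 1) * (∑ j, c (k ::ₘ j ::ₘ m) * v j) ^ 2 / q) :=
            mul_le_mul_of_nonneg_left h1 (hp k).le
        _ = _ := by ring

open Classical in
noncomputable def cc {α : Type*} [Fintype α] (M : Matroid α) (ε : ℝ) (s : Multiset α) (j : ℕ) : ℝ :=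
  ∑ I : Finset α, if M.Indep (I : Set α) ∧ s ≤ I.val then
    ((Fintype.card α - I.card).descFactorial j : ℝ) * ε ^ (Fintype.card α - I.card - j) else 0

lemma cc_nonneg {α : Type*} [Fintype α] (M : Matroid α) (ε : ℝ) (hε : 0 ≤ ε) (s : Multiset α) (j : ℕ) :
    0 ≤ cc M ε s j := by
  unfold cc
  refine Finset.sum_nonneg fun I _ => ?_
  split_ifs <;> positivity

lemma cc_euler {α : Type*} [Fintype α] (M : Matroid α) (ε : ℝ) (s : Multiset α) (j : ℕ) :
    ε * cc M ε s (j + 1) + ∑ a, cc M ε (a ::ₘ s) j =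
      ((Fintype.card α : ℝ) - (s.card + j)) * cc M ε s j := by
  classical
  unfold cc
  rw [Finset.sum_comm, Finset.mul_sum, Finset.mul_sum, ← Finset.sum_add_distrib]
  refine Finset.sum_congr rfl fun I _ => ?_
  by_cases h : M.Indep (I : Set α) ∧ s ≤ I.val
  · have hnd : s.Nodup := Multiset.nodup_of_le h.2 I.nodup
    have hcond : ∀ a, (M.Indep (I : Set α) ∧ a ::ₘ s ≤ I.val) ↔ a ∈ I \ s.toFinset := by
      intro a
      simp only [h.1, true_and, Finset.mem_sdiff, Multiset.mem_toFinset]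
      constructor
      · intro h'
        refine ⟨Multiset.mem_of_le h' (Multiset.mem_cons_self _ _), ?_⟩
        have := Multiset.nodup_of_le h' I.nodup
        exact (Multiset.nodup_cons.1 this).1
      · rintro ⟨h1, h2⟩
        rw [Multiset.le_iff_subset (Multiset.nodup_cons.2 ⟨h2, hnd⟩)]
        exact Multiset.cons_subset.2 ⟨h1, Multiset.subset_of_le h.2⟩
    simp only [hcond]
    rw [if_pos h, if_pos h]
    rw [Finset.sum_ite_mem, Finset.univ_inter, Finset.sum_const, nsmul_eq_mul]
    have hsub : s.toFinset ⊆ I := by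
      intro a ha
      exact Multiset.mem_of_le h.2 (Multiset.mem_toFinset.1 ha)
    have hcard : (I \ s.toFinset).card + s.card = I.card := by
      rw [Finset.card_sdiff_of_subset hsub, Multiset.toFinset_card_of_nodup hnd]
      have := Multiset.card_le_card h.2
      simp only [Finset.card_val] at this
      omega
    have hIn : I.card ≤ Fintype.card α := Finset.card_le_univ I
    obtain ⟨r, hr⟩ := Nat.exists_eq_add_of_le hIn
    have e1 : Fintype.card α - I.card = r := by omega
    rw [e1, hr, ← hcard]
    rcases lt_trichotomy j r with hj | hj | hj
    · obtain ⟨t, rfl⟩ := Nat.exists_eq_add_of_lt hj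
      rw [Nat.descFactorial_succ]
      have e2 : j + t + 1 - (j + 1) = t := by omega
      have e3 : j + t + 1 - j = t + 1 := by omega
      rw [e2, e3]
      push_cast
      ring
    · subst hj
      rw [Nat.descFactorial_succ]
      simp
    · rw [Nat.descFactorial_of_lt hj, Nat.descFactorial_of_lt (by omega)]
      simp
  · have h2 : ∀ a, ¬ (M.Indep (I : Set α) ∧ a ::ₘ s ≤ I.val) := fun a h' =>
      h ⟨h'.1, (Multiset.le_cons_self _ _).trans h'.2⟩
    simp [h, h2]

open Classical in
lemma cc_top {α : Type*} [Fintype α] (M : Matroid α) (ε : ℝ) (s : Multiset α) (j : ℕ)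
    (h : s.card + j = Fintype.card α) :
    cc M ε s j = if s.Nodup ∧ M.Indep {a | a ∈ s} then (j.factorial : ℝ) else 0 := by
  unfold cc
  have hI : ∀ I : Finset α, (if M.Indep (I : Set α) ∧ s ≤ I.val then
    ((Fintype.card α - I.card).descFactorial j : ℝ) * ε ^ (Fintype.card α - I.card - j) else 0) =
      if M.Indep (I : Set α) ∧ s = I.val then (j.factorial : ℝ) else 0 := by
    intro I
    by_cases h1 : s = I.val
    · have e : Fintype.card α - I.card = j := by
        rw [← h, h1, Finset.card_val]; omega
      rw [e]
      simp [h1, Nat.descFactorial_self]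
    · simp only [h1, and_false, if_false]
      split_ifs with h2
      · have : s.card < I.card := by
          by_contra hcon
          exact h1 (Multiset.eq_of_le_of_card_le h2.2 (by simpa using hcon))
        have hIn : I.card ≤ Fintype.card α := Finset.card_le_univ I
        rw [Nat.descFactorial_of_lt (by omega)]; simp
      · rfl
  rw [Finset.sum_congr rfl fun I _ => hI I]
  by_cases hnd : s.Nodup
  · rw [Finset.sum_eq_single (⟨s, hnd⟩ : Finset α)]
    · have : ((⟨s, hnd⟩ : Finset α) : Set α) = {a | a ∈ s} := by ext; simp
      simp [this, hnd]
    · intro I _ hne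
      rw [if_neg]
      rintro ⟨-, h2⟩
      exact hne (Finset.val_injective h2.symm)
    · simp
  · rw [if_neg (fun h => hnd h.1)]
    refine Finset.sum_eq_zero fun I _ => ?_
    rw [if_neg]
    rintro ⟨-, h2⟩
    exact hnd (h2 ▸ I.nodup)

lemma cc_pos_indep {α : Type*} [Fintype α] (M : Matroid α) (ε : ℝ) (s : Multiset α) (j : ℕ)
    (h : 0 < cc M ε s j) : s.Nodup ∧ M.Indep {a | a ∈ s} := by
  classical
  unfold cc at h
  obtain ⟨I, -, hI⟩ := Finset.exists_ne_zero_of_sum_ne_zero h.ne'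
  split_ifs at hI with h2
  · refine ⟨Multiset.nodup_of_le h2.2 I.nodup, h2.1.subset ?_⟩
    intro a ha
    exact Multiset.mem_of_le h2.2 ha
  · exact absurd rfl hI

lemma cc_pos {α : Type*} [Fintype α] (M : Matroid α) (ε : ℝ) (hε : 0 < ε) (s : Multiset α) (j : ℕ)
    (hs : s.Nodup) (hi : M.Indep {a | a ∈ s}) (h : s.card + j ≤ Fintype.card α) :
    0 < cc M ε s j := by
  classical
  unfold cc
  refine Finset.sum_pos' (fun I _ => by split_ifs <;> positivity) ⟨⟨s, hs⟩, Finset.mem_univ _, ?_⟩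
  have : ((⟨s, hs⟩ : Finset α) : Set α) = {a | a ∈ s} := by ext; simp
  rw [if_pos ⟨by rwa [this], le_rfl⟩]
  have : 0 < (Fintype.card α - (⟨s, hs⟩ : Finset α).card).descFactorial j := by
    rw [Nat.pos_iff_ne_zero, Ne, Nat.descFactorial_eq_zero_iff_lt]
    simp only [Finset.card_mk]
    omega
  positivity

open Classical in
noncomputable def cm {α : Type*} [Fintype α] (M : Matroid α) (ε : ℝ) (m : Multiset (Option α)) : ℝ :=
  cc M ε (m.filterMap id) (m.count none)

lemma fm_some {α : Type*} (a : α) (m : Multiset (Option α)) :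
    (some a ::ₘ m).filterMap id = a ::ₘ m.filterMap id :=
  Multiset.filterMap_cons_some id (some a) m rfl

open Classical in
lemma cm_none {α : Type*} [Fintype α] (M : Matroid α) (ε : ℝ) (m : Multiset (Option α)) :
    cm M ε (none ::ₘ m) = cc M ε (m.filterMap id) (m.count none + 1) := by
  unfold cm
  rw [Multiset.filterMap_cons_none _ _ rfl, Multiset.count_cons_self]

open Classical in
lemma cm_some {α : Type*} [Fintype α] (M : Matroid α) (ε : ℝ) (m : Multiset (Option α)) (a : α) :
    cm M ε (some a ::ₘ m) = cc M ε (a ::ₘ m.filterMap id) (m.count none) := by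
  unfold cm
  rw [fm_some, Multiset.count_cons_of_ne (by simp)]

lemma card_split {α : Type*} [DecidableEq α] (m : Multiset (Option α)) :
    (m.filterMap id).card + m.count none = m.card := by
  induction m using Multiset.induction with
  | empty => simp
  | cons a m ih =>
    cases a with
    | none => rw [Multiset.filterMap_cons_none _ _ rfl, Multiset.count_cons_self, Multiset.card_cons]; omega
    | some a =>
      rw [fm_some, Multiset.count_cons_of_ne (by simp), Multiset.card_cons, Multiset.card_cons]; omega

lemma par_iff {α : Type*} (M : Matroid α) (S : Set α) (hE : M.E = Set.univ) (a b : α)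
    (ha : a ∉ S) (hb : b ∉ S) (hS : M.Indep S) :
    (a ≠ b ∧ M.Indep (insert a (insert b S))) ↔ (M.Indep (insert a S) ∧ M.Indep (insert b S) ∧
      M.closure (insert a S) ≠ M.closure (insert b S)) := by
  constructor
  · rintro ⟨hab, hi⟩
    have hbi : M.Indep (insert b S) := hi.subset (Set.subset_insert _ _)
    refine ⟨hi.subset (Set.insert_subset_insert (Set.subset_insert _ _)), hbi, ?_⟩
    intro heq
    rw [hbi.insert_indep_iff_of_notMem (by simp [hab, ha])] at hi
    refine hi.2 (heq ▸ M.mem_closure_of_mem (Set.mem_insert _ _) (by simp [hE]))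
  · rintro ⟨h1, h2, h3⟩
    have hab : a ≠ b := by rintro rfl; exact h3 rfl
    refine ⟨hab, ?_⟩
    rw [h2.insert_indep_iff_of_notMem (by simp [hab, ha])]
    refine ⟨by simp [hE], fun hcl => h3 ?_⟩
    refine M.closure_insert_congr ⟨hcl, ?_⟩
    rw [hS.insert_indep_iff_of_notMem ha] at h1
    exact h1.2

lemma cm_base {α : Type*} [Fintype α] (M : Matroid α) (hE : M.E = Set.univ) (ε : ℝ) (hε : 0 < ε)
    (p : Option α → ℝ) (hp : ∀ i, 0 < p i)
    (m : Multiset (Option α)) (hm : m.card + 2 = Fintype.card α) (v : Option α → ℝ) :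
    (∑ i, ∑ j, v i * v j * cm M ε (i ::ₘ j ::ₘ m)) * (∑ i, ∑ j, p i * p j * cm M ε (i ::ₘ j ::ₘ m)) ≤
      (∑ i, ∑ j, v i * p j * cm M ε (i ::ₘ j ::ₘ m)) ^ 2 := by
  classical
  have hspl := card_split m
  set s := m.filterMap id with hs
  set j := m.count none with hj
  have f00 : cm M ε (none ::ₘ none ::ₘ m) = cc M ε s (j + 2) := by
    rw [cm_none, Multiset.filterMap_cons_none _ _ rfl, Multiset.count_cons_self]
  have f0a : ∀ a, cm M ε (none ::ₘ some a ::ₘ m) = cc M ε (a ::ₘ s) (j + 1) := by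
    intro a
    rw [cm_none, fm_some, Multiset.count_cons_of_ne (by simp)]
  have fa0 : ∀ a, cm M ε (some a ::ₘ none ::ₘ m) = cc M ε (a ::ₘ s) (j + 1) := by
    intro a
    rw [Multiset.cons_swap, f0a]
  have fab : ∀ a b, cm M ε (some a ::ₘ some b ::ₘ m) = cc M ε (a ::ₘ b ::ₘ s) j := by
    intro a b
    rw [cm_some, fm_some, Multiset.count_cons_of_ne (by simp)]
  by_cases hS : s.Nodup ∧ M.Indep {a | a ∈ s}
  swap
  · have hz : ∀ i k, cm M ε (i ::ₘ k ::ₘ m) = 0 := by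
      have g : ∀ t : Multiset α, s ≤ t → ∀ j, cc M ε t j = 0 := by
        intro t ht j
        refine le_antisymm (not_lt.1 fun hpos => hS ?_) (cc_nonneg _ _ hε.le _ _)
        obtain ⟨h1, h2⟩ := cc_pos_indep _ _ _ _ hpos
        exact ⟨Multiset.nodup_of_le ht h1, h2.subset fun a ha => Multiset.mem_of_le ht ha⟩
      intro i k
      cases i <;> cases k
      · rw [f00]; exact g _ le_rfl _
      · rw [f0a]; exact g _ (Multiset.le_cons_self _ _) _
      · rw [fa0]; exact g _ (Multiset.le_cons_self _ _) _
      · rw [fab]; exact g _ ((Multiset.le_cons_self _ _).trans (Multiset.le_cons_self _ _)) _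
    simp [hz]
  obtain ⟨hnd, hind⟩ := hS
  set S : Set α := {a | a ∈ s} with hSdef
  set L : Finset α := Finset.univ.filter (fun a => a ∉ s ∧ M.Indep (insert a S)) with hL
  set φ : α → Set α := fun a => M.closure (insert a S) with hφ
  have hset : ∀ (t : Multiset α) a, {x | x ∈ a ::ₘ t} = insert a {x | x ∈ t} := by
    intro t a; ext x; simp
  have hLcard : L.card ≤ j + 2 := by
    have h1 : L ⊆ Finset.univ \ s.toFinset := by
      intro a ha
      simp only [hL, Finset.mem_filter] at ha
      simp [ha.2.1]
    have h2 := Finset.card_le_card h1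
    rw [Finset.card_sdiff_of_subset (Finset.subset_univ _), Multiset.toFinset_card_of_nodup hnd, Finset.card_univ] at h2
    omega
  have g00 : cm M ε (none ::ₘ none ::ₘ m) = j.factorial * ((j + 2) * (j + 1)) := by
    rw [f00, cc_top _ _ _ _ (by omega), if_pos ⟨hnd, hind⟩, Nat.factorial_succ, Nat.factorial_succ]
    push_cast; ring
  have g0a : ∀ a, cm M ε (none ::ₘ some a ::ₘ m) = j.factorial * (j + 1) * (if a ∈ L then 1 else 0) := by
    intro a
    rw [f0a, cc_top _ _ _ _ (by rw [Multiset.card_cons]; omega), hset]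
    have : ((a ::ₘ s).Nodup ∧ M.Indep (insert a {x | x ∈ s})) ↔ a ∈ L := by
      simp [hL, hnd, hSdef, Multiset.nodup_cons]
    simp only [this]
    split_ifs
    · rw [Nat.factorial_succ]; push_cast; ring
    · simp
  have ga0 : ∀ a, cm M ε (some a ::ₘ none ::ₘ m) = j.factorial * (j + 1) * (if a ∈ L then 1 else 0) := by
    intro a
    rw [Multiset.cons_swap, g0a]
  have gab : ∀ a b, cm M ε (some a ::ₘ some b ::ₘ m) = j.factorial *
      ((if a ∈ L then 1 else 0) * (if b ∈ L then 1 else 0) -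
        (if a ∈ L then 1 else 0) * (if b ∈ L then (if φ b = φ a then 1 else 0) else 0)) := by
    intro a b
    rw [fab, cc_top _ _ _ _ (by rw [Multiset.card_cons, Multiset.card_cons]; omega), hset, hset]
    have : ((a ::ₘ b ::ₘ s).Nodup ∧ M.Indep (insert a (insert b {x | x ∈ s}))) ↔
        (a ∈ L ∧ b ∈ L ∧ φ b ≠ φ a) := by
      simp only [hL, Multiset.nodup_cons, Finset.mem_filter, Finset.mem_univ, true_and, hnd, Multiset.mem_cons, not_or]
      by_cases ha : a ∈ s
      · simp [ha]
      by_cases hb : b ∈ s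
      · simp [hb]
      have := par_iff M S hE a b ha hb hind
      simp only [ha, hb, not_false_eq_true, and_true, true_and, ← ne_eq]
      rw [hφ, ne_comm (a := M.closure _)]
      exact this
    simp only [this]
    by_cases h1 : a ∈ L <;> by_cases h2 : b ∈ L <;> by_cases h3 : φ b = φ a <;> simp [h1, h2, h3]
  set Y : (Option α → ℝ) → ℝ := fun v => ∑ a ∈ L, v (some a) with hY
  set y : (Option α → ℝ) → Set α → ℝ := fun v t => ∑ a ∈ L with φ a = t, v (some a) with hy
  have hform : ∀ v : Option α → ℝ, ∑ i, ∑ k, v i * v k * cm M ε (i ::ₘ k ::ₘ m) =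
      j.factorial * ((j + 2) * (j + 1) * (v none)^2 + 2 * (j + 1) * v none * Y v + (Y v)^2 -
        ∑ t ∈ L.image φ, (y v t)^2) := by
    intro v
    have hyy : ∑ t ∈ L.image φ, (y v t)^2 = ∑ a ∈ L, v (some a) * y v (φ a) := by
      rw [← Finset.sum_fiberwise_of_maps_to (g := φ) (t := L.image φ) (fun a ha => Finset.mem_image_of_mem φ ha)]
      refine Finset.sum_congr rfl fun t _ => ?_
      rw [sq]
      nth_rewrite 1 [hy]
      simp only
      rw [Finset.sum_mul]
      refine Finset.sum_congr rfl fun a ha => ?_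
      rw [(Finset.mem_filter.1 ha).2]
    have hY' : Y v = ∑ a, v (some a) * (if a ∈ L then 1 else 0) := by
      simp [hY]
    have hy' : ∀ a, y v (φ a) = ∑ b, v (some b) * (if b ∈ L then (if φ b = φ a then 1 else 0) else 0) := by
      intro a
      simp only [hy, mul_ite, mul_one, mul_zero, Finset.sum_ite_mem, Finset.univ_inter, Finset.sum_filter]
    have hyy' : ∑ t ∈ L.image φ, (y v t)^2 = ∑ a, (v (some a) * (if a ∈ L then 1 else 0)) * y v (φ a) := by
      rw [hyy]; simp
    simp only [Fintype.sum_option, g00, g0a, ga0, gab]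
    rw [hyy', sq (Y v)]
    have e1 : ∑ a, v none * v (some a) * (↑j.factorial * (↑j + 1) * (if a ∈ L then 1 else 0)) =
        j.factorial * (j + 1) * v none * Y v := by
      rw [hY', Finset.mul_sum]; exact Finset.sum_congr rfl fun a _ => by ring
    have e2 : ∑ a, v (some a) * v none * (↑j.factorial * (↑j + 1) * (if a ∈ L then 1 else 0)) =
        j.factorial * (j + 1) * v none * Y v := by
      rw [hY', Finset.mul_sum]; exact Finset.sum_congr rfl fun a _ => by ring
    have e3 : ∑ a, ∑ b, v (some a) * v (some b) * (↑j.factorial *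
      ((if a ∈ L then 1 else 0) * (if b ∈ L then 1 else 0) -
        (if a ∈ L then 1 else 0) * (if b ∈ L then (if φ b = φ a then 1 else 0) else 0))) =
        j.factorial * (Y v * Y v - ∑ a, (v (some a) * (if a ∈ L then 1 else 0)) * y v (φ a)) := by
      have : Y v * Y v = ∑ a, (v (some a) * (if a ∈ L then 1 else 0)) * Y v := by
        rw [← Finset.sum_mul, ← hY']
      rw [this, ← Finset.sum_sub_distrib, Finset.mul_sum]
      refine Finset.sum_congr rfl fun a _ => ?_
      rw [hy', hY', Finset.mul_sum, Finset.mul_sum, ← Finset.sum_sub_distrib, Finset.mul_sum]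
      exact Finset.sum_congr rfl fun b _ => by ring
    rw [Finset.sum_add_distrib, e1, e2, e3]
    ring
  have hneg : ∀ v : Option α → ℝ, (j + 2) * v none + Y v = 0 →
      ∑ i, ∑ k, v i * v k * cm M ε (i ::ₘ k ::ₘ m) ≤ 0 := by
    intro v hv
    rw [hform]
    refine mul_nonpos_of_nonneg_of_nonpos (by positivity) ?_
    have hYv : Y v = ∑ t ∈ L.image φ, y v t := by
      rw [hY, hy]
      exact (Finset.sum_fiberwise_of_maps_to (fun a ha => Finset.mem_image_of_mem φ ha) _).symm
    have h1 : (Y v)^2 ≤ (j + 2) * ∑ t ∈ L.image φ, (y v t)^2 := by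
      rw [hYv]
      refine sq_sum_le_card_mul_sum_sq.trans ?_
      refine mul_le_mul_of_nonneg_right ?_ (Finset.sum_nonneg fun _ _ => sq_nonneg _)
      exact_mod_cast (Finset.card_image_le).trans hLcard
    have h2 : Y v = - ((j + 2) * v none) := by linarith
    rw [h2] at h1 ⊢
    set W := ∑ t ∈ L.image φ, (y v t)^2
    have h3 : (0:ℝ) < j + 2 := by positivity
    have h4 : (j + 2) * (v none)^2 ≤ W := by
      refine le_of_mul_le_mul_left ?_ h3
      linarith
    linarith
  have hnn : ∀ m', 0 ≤ cm M ε m' := fun m' => cc_nonneg _ _ hε.le _ _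
  refine hyp_of_perp (fun i k => cm M ε (i ::ₘ k ::ₘ m)) (fun i k => by rw [Multiset.cons_swap])
    (fun v => (j + 2) * v none + Y v) ?_ p (hneg p) ?_ hneg v
  · intro a b u v
    simp only [hY, Finset.sum_add_distrib, ← Finset.mul_sum]
    ring
  · refine Finset.sum_nonneg fun i _ => Finset.sum_nonneg fun k _ => ?_
    have := hp i
    have := hp k
    have := hnn (i ::ₘ k ::ₘ m)
    positivity

lemma cc_ineq {α : Type*} [Fintype α] (M : Matroid α) (hE : M.E = Set.univ) (ε : ℝ) (hε : 0 < ε)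
    (k : ℕ) (hk : 1 ≤ k) (hkn : k < Fintype.card α) :
    ((k : ℝ) + 1) * (cc M ε 0 (Fintype.card α - k + 1) * cc M ε 0 (Fintype.card α - k - 1)) ≤
      k * cc M ε 0 (Fintype.card α - k) ^ 2 := by
  classical
  set n := Fintype.card α with hn
  set p : Option α → ℝ := fun i => i.elim ε (fun _ => 1) with hp
  have hp0 : ∀ i, 0 < p i := by
    intro i; cases i <;> simp [hp, hε]
  have euler : ∀ m : Multiset (Option α), ∑ i, p i * cm M ε (i ::ₘ m) = ((n : ℝ) - m.card) * cm M ε m := by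
    intro m
    rw [Fintype.sum_option]
    simp only [cm_none, cm_some, hp, Option.elim, one_mul]
    rw [cc_euler, ← card_split m]
    push_cast
    unfold cm
    congr!
  have main := hyp_induction (cm M ε) (fun m => cc_nonneg _ _ hε.le _ _) p hp0 none n euler
    (by
      intro m i hm hpos
      have h1 : (m.filterMap id).Nodup ∧ M.Indep {a | a ∈ m.filterMap id} := by
        cases i with
        | none =>
          rw [cm_none] at hpos
          exact cc_pos_indep _ _ _ _ hpos
        | some a =>
          rw [cm_some] at hpos
          have := cc_pos_indep _ _ _ _ hpos
          exact ⟨Multiset.nodup_of_le (Multiset.le_cons_self _ _) this.1,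
            this.2.subset fun x hx => Multiset.mem_cons_of_mem hx⟩
      rw [cm_none]
      refine cc_pos _ _ hε _ _ h1.1 h1.2 ?_
      have := card_split m
      omega)
    (fun m hm v => cm_base M hE ε hε p hp0 m hm v) (k - 1) (Multiset.replicate (n - k - 1) none)
    (by rw [Multiset.card_replicate]; omega) (fun i => if i = none then 1 else 0)
  set m : Multiset (Option α) := Multiset.replicate (n - k - 1) none with hm
  have hmc : (m.card : ℝ) = n - k - 1 := by
    rw [hm, Multiset.card_replicate, Nat.sub_sub, Nat.cast_sub (by omega)]; push_cast; ring
  have hfm : m.filterMap id = 0 := by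
    rw [← Multiset.card_eq_zero]
    have := card_split m
    rw [hm, Multiset.count_replicate_self, Multiset.card_replicate, ← hm] at this
    omega
  have hct : m.count none = n - k - 1 := by rw [hm, Multiset.count_replicate_self]
  have k0 : cm M ε m = cc M ε 0 (n - k - 1) := by
    rw [← hfm, ← hct]; unfold cm; congr!
  have k1 : cm M ε (none ::ₘ m) = cc M ε 0 (n - k) := by
    rw [cm_none, hfm, hct]; congr 1; omega
  have k2 : cm M ε (none ::ₘ none ::ₘ m) = cc M ε 0 (n - k + 1) := by
    rw [cm_none, Multiset.filterMap_cons_none _ _ rfl, Multiset.count_cons_self, hfm, hct]; congr 1; omega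
  have t1 : ∀ i, ∑ j, p j * cm M ε (i ::ₘ j ::ₘ m) = k * cm M ε (i ::ₘ m) := by
    intro i
    have := euler (i ::ₘ m)
    rw [Multiset.card_cons] at this
    push_cast at this
    rw [hmc] at this
    rw [show (k : ℝ) = n - (n - k - 1 + 1) by ring, ← this]
    exact Finset.sum_congr rfl fun j _ => by rw [Multiset.cons_swap]
  have t2 : ∑ i, ∑ j, p i * p j * cm M ε (i ::ₘ j ::ₘ m) = k * ((k + 1) * cc M ε 0 (n - k - 1)) := by
    have := euler m
    rw [hmc] at this
    rw [← k0, show (k : ℝ) + 1 = n - (n - k - 1) by ring, ← this, Finset.mul_sum]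
    refine Finset.sum_congr rfl fun i _ => ?_
    calc _ = p i * (k * cm M ε (i ::ₘ m)) := by
          rw [← t1, Finset.mul_sum]; exact Finset.sum_congr rfl fun j _ => by ring
      _ = _ := by ring
  have t3 : ∑ i : Option α, ∑ j, (if i = none then (1:ℝ) else 0) * p j * cm M ε (i ::ₘ j ::ₘ m) = k * cc M ε 0 (n - k) := by
    rw [← k1, ← t1]
    rw [Fintype.sum_option]
    simp
  have t4 : ∑ i : Option α, ∑ j : Option α, (if i = none then (1:ℝ) else 0) * (if j = none then 1 else 0) * cm M ε (i ::ₘ j ::ₘ m) = cc M ε 0 (n - k + 1) := by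
    rw [← k2]
    simp
  rw [t2, t3, t4] at main
  have hk0 : (0:ℝ) < k := by exact_mod_cast hk
  refine le_of_mul_le_mul_left ?_ hk0
  linarith

lemma cc_zero {α : Type*} [Fintype α] (M : Matroid α) (j : ℕ) (hj : j ≤ Fintype.card α) :
    cc M 0 0 j = j.factorial * numIndep M (Fintype.card α - j) := by
  classical
  have h1 : numIndep M (Fintype.card α - j) =
      (Finset.univ.filter fun I : Finset α => M.Indep (I : Set α) ∧ I.card = Fintype.card α - j).card := by
    unfold numIndep
    rw [← Set.ncard_coe_finset, ← Set.ncard_image_of_injective _ (Finset.coe_injective (α := α))]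
    congr 1
    ext S
    simp only [Set.mem_ofPred_eq, Set.mem_image, Finset.coe_filter, Finset.mem_univ, true_and]
    constructor
    · rintro ⟨h1, h2⟩
      refine ⟨S.toFinset, ⟨by simpa using h1, ?_⟩, by simp⟩
      rw [← h2, Set.ncard_eq_toFinset_card']
    · rintro ⟨I, ⟨h1, h2⟩, rfl⟩
      exact ⟨h1, by rw [Set.ncard_coe_finset, h2]⟩
  rw [h1, Finset.card_filter]
  unfold cc
  push_cast
  rw [Finset.mul_sum]
  refine Finset.sum_congr rfl fun I _ => ?_
  by_cases hI : M.Indep (I : Set α)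
  swap
  · simp [hI]
  have hIn : I.card ≤ Fintype.card α := Finset.card_le_univ I
  simp only [hI, Multiset.zero_le, true_and, if_true]
  rcases lt_trichotomy (Fintype.card α - I.card) j with h | h | h
  · rw [Nat.descFactorial_of_lt h, if_neg (by omega)]; simp
  · rw [h, if_pos (by omega), Nat.descFactorial_self]; simp
  · rw [if_neg (by omega), zero_pow (by omega)]; simp

lemma cc_cont {α : Type*} [Fintype α] (M : Matroid α) (s : Multiset α) (j : ℕ) :
    Continuous (fun ε => cc M ε s j) := by
  unfold cc
  refine continuous_finsetSum _ fun I _ => ?_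
  split_ifs <;> fun_prop

/-- Ultra-log-concavity for matroids (strong Mason conjecture). -/
theorem stmt_5 {α : Type*} [Fintype α] (M : Matroid α) (hE : M.E = Set.univ)
    (k : ℕ) (hk : 1 ≤ k) (hk' : k < matroidRk M) :
    ((numIndep M k : ℝ)) ^ 2 ≥
      (1 + 1 / (k : ℝ)) * (1 + 1 / ((Fintype.card α : ℝ) - (k : ℝ))) *
        (numIndep M (k - 1) : ℝ) * (numIndep M (k + 1) : ℝ) := by
  have hkn : k < Fintype.card α := by
    refine lt_of_lt_of_le hk' ?_
    unfold matroidRk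
    refine csSup_le ⟨0, ∅, M.empty_indep, by simp⟩ ?_
    rintro n ⟨S, -, rfl⟩
    rw [← Nat.card_eq_fintype_card]
    exact Set.ncard_le_card S
  have hlim : ((k : ℝ) + 1) * (cc M 0 0 (Fintype.card α - k + 1) * cc M 0 0 (Fintype.card α - k - 1)) ≤
      k * cc M 0 0 (Fintype.card α - k) ^ 2 := by
    have c1 := cc_cont M 0 (Fintype.card α - k + 1)
    have c2 := cc_cont M 0 (Fintype.card α - k - 1)
    have c3 := cc_cont M 0 (Fintype.card α - k)
    have hl : Filter.Tendsto (fun ε => ((k : ℝ) + 1) * (cc M ε 0 (Fintype.card α - k + 1) * cc M ε 0 (Fintype.card α - k - 1)))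
        (nhdsWithin 0 (Set.Ioi 0)) (nhds _) :=
      ((continuous_const.mul (c1.mul c2)).tendsto 0).mono_left nhdsWithin_le_nhds
    have hr : Filter.Tendsto (fun ε => (k : ℝ) * cc M ε 0 (Fintype.card α - k) ^ 2)
        (nhdsWithin 0 (Set.Ioi 0)) (nhds _) :=
      ((continuous_const.mul (c3.pow 2)).tendsto 0).mono_left nhdsWithin_le_nhds
    refine le_of_tendsto_of_tendsto hl hr ?_
    filter_upwards [self_mem_nhdsWithin] with ε hε
    exact cc_ineq M hE ε hε k hk hkn
  rw [cc_zero _ _ (by omega), cc_zero _ _ (by omega), cc_zero _ _ (by omega)] at hlim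
  obtain ⟨d, hd⟩ := Nat.exists_eq_add_of_lt hkn
  have e1 : Fintype.card α - (Fintype.card α - k + 1) = k - 1 := by omega
  have e2 : Fintype.card α - (Fintype.card α - k - 1) = k + 1 := by omega
  have e3 : Fintype.card α - (Fintype.card α - k) = k := by omega
  rw [e1, e2, e3] at hlim
  have e4 : Fintype.card α - k = d + 1 := by omega
  have e5 : (Fintype.card α : ℝ) - k = d + 1 := by rw [hd]; push_cast; ring
  rw [e4] at hlim
  rw [e5]
  simp only [Nat.add_sub_cancel, Nat.factorial_succ] at hlim
  push_cast at hlim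
  set A := (numIndep M (k - 1) : ℝ)
  set B := (numIndep M (k + 1) : ℝ)
  set C := (numIndep M k : ℝ)
  have hf : (0 : ℝ) < (d.factorial : ℝ) := by positivity
  have hk0 : (0 : ℝ) < k := by exact_mod_cast hk
  have hd0 : (0 : ℝ) < (d : ℝ) + 1 := by positivity
  have h2 : ((k : ℝ) + 1) * (d + 2) * A * B ≤ k * (d + 1) * C ^ 2 := by
    refine le_of_mul_le_mul_left ?_ (show (0:ℝ) < (d + 1) * d.factorial ^ 2 by positivity)
    linarith
  have h3 : (1 + 1 / (k : ℝ)) * (1 + 1 / ((d : ℝ) + 1)) * A * B = ((k : ℝ) + 1) * (d + 2) * A * B / (k * (d + 1)) := by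
    field_simp
    ring
  rw [h3, ge_iff_le, div_le_iff₀ (by positivity)]
  linarith
end

section
/- Let r ≥ 1 and let B be the (r+1)×(r+1) real symmetric matrix with B_{ii} = 0 for 1 ≤ i ≤ r, B_{(r+1)(r+1)} = 1, and all other entries equal to 1. Then det(B) = (−1)^r and B has exactly one positive eigenvalue, counted with multiplicity. -/
open Matrix

/-- The matrix `M` has exactly one positive eigenvalue, counted with multiplicity. -/
def ExactlyOnePosEigenvalue {m : Type*} [Fintype m] [DecidableEq m]
    (M : Matrix m m ℝ) : Prop :=
  ∃ hM : M.IsHermitian,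
    (Finset.univ.filter fun i => 0 < hM.eigenvalues i).card = 1

theorem det_aux {r : ℕ} (B : Matrix (Fin (r + 1)) (Fin (r + 1)) ℝ)
    (hB : ∀ i j : Fin (r + 1),
      B i j = if i = j then (if (i : ℕ) < r then 0 else 1) else 1) :
    B.det = (-1) ^ r := by
  let C : Matrix (Fin (r + 1)) (Fin (r + 1)) ℝ := fun i j =>
    if i = Fin.last r then 1 else if i = j then -1 else 0
  have h : B.det = C.det := by
    refine Matrix.det_eq_of_forall_row_eq_smul_add_const
      (fun i => if i = Fin.last r then 0 else 1) (Fin.last r) (by simp) ?_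
    intro i j
    have hi : (i : ℕ) < r ↔ i ≠ Fin.last r := by
      have := i.isLt
      rw [Ne, Fin.ext_iff, Fin.val_last]; omega
    rw [hB]
    simp only [C, hi]
    by_cases h1 : i = Fin.last r <;> by_cases h2 : i = j <;>
      simp only [h1, h2, if_true, if_false, ne_eq, not_true, not_false_iff] <;> (try subst h2) <;> simp_all
  rw [h, Matrix.det_of_lowerTriangular]
  · rw [Fin.prod_univ_castSucc]
    simp [C, Fin.castSucc_ne_last]
  · intro i j hij
    have hij' : i < j := hij
    have h1 : i ≠ Fin.last r := (lt_of_lt_of_le hij' (Fin.le_last j)).ne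
    simp [C, h1, hij'.ne]

theorem stmt_9 {r : ℕ} (hr : 1 ≤ r)
    (B : Matrix (Fin (r + 1)) (Fin (r + 1)) ℝ)
    (hB : ∀ i j : Fin (r + 1),
      B i j = if i = j then (if (i : ℕ) < r then 0 else 1) else 1) :
    B.det = (-1) ^ r ∧ ExactlyOnePosEigenvalue B := by
  refine ⟨det_aux B hB, ?_⟩
  have hM : B.IsHermitian := by
    ext i j
    simp only [conjTranspose_apply, star_trivial, hB]
    by_cases h : i = j
    · simp [h]
    · simp [h, Ne.symm h]
  refine ⟨hM, ?_⟩
  let d : Fin (r + 1) → ℝ := fun i => if (i : ℕ) < r then 1 else 0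
  have hd : ∀ i, d i * d i = d i := by intro i; simp only [d]; split_ifs <;> simp
  have hBd : ∀ i j, B i j = 1 - if i = j then d i else 0 := by
    intro i j; rw [hB]; simp only [d]; split_ifs <;> simp
  have hform : ∀ u v : Fin (r + 1) → ℝ,
      u ⬝ᵥ (B *ᵥ v) = (∑ i, u i) * (∑ i, v i) - ∑ i, (d i * u i) * (d i * v i) := by
    intro u v
    have h1 : ∀ i, (B *ᵥ v) i = (∑ j, v j) - d i * v i := by
      intro i
      simp [mulVec, dotProduct, hBd, sub_mul, Finset.sum_sub_distrib]
    simp only [dotProduct, h1, mul_sub, Finset.sum_sub_distrib, Finset.sum_mul]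
    congr 1
    refine Finset.sum_congr rfl fun i _ => ?_
    linear_combination (-(u i * v i)) * hd i
  let e := fun i => (hM.eigenvectorBasis i).ofLp
  have hee : ∀ i j, e i ⬝ᵥ e j = if i = j then 1 else 0 := by
    intro i j
    have := (orthonormal_iff_ite.mp hM.eigenvectorBasis.orthonormal) j i
    simp only [EuclideanSpace.inner_eq_star_dotProduct, star_trivial] at this
    simp only [e, this, eq_comm]
  have hev : ∀ i j, e i ⬝ᵥ (B *ᵥ e j) = if i = j then hM.eigenvalues j else 0 := by
    intro i j
    have : B *ᵥ e j = hM.eigenvalues j • e j := hM.mulVec_eigenvectorBasis j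
    rw [this, dotProduct_smul, hee]; simp
  apply le_antisymm
  · rw [Finset.card_le_one]
    intro i hi j hj
    by_contra hij
    simp only [Finset.mem_filter, Finset.mem_univ, true_and] at hi hj
    have h1 := hev i i
    have h2 := hev j j
    have h3 := hev i j
    rw [hform] at h1 h2 h3
    simp only [if_true, if_neg hij] at h1 h2 h3
    have cs := Finset.sum_mul_sq_le_sq_mul_sq Finset.univ
      (fun k => d k * e i k) (fun k => d k * e j k)
    have p1 : 0 ≤ ∑ k, (d k * e i k) ^ 2 := Finset.sum_nonneg fun _ _ => sq_nonneg _
    have p2 : 0 ≤ ∑ k, (d k * e j k) ^ 2 := Finset.sum_nonneg fun _ _ => sq_nonneg _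
    simp only [← pow_two] at h1 h2
    rw [← sub_eq_zero.mp h3, mul_pow] at cs
    have := mul_lt_mul'' (by linarith : ∑ k, (d k * e i k) ^ 2 < (∑ k, e i k) ^ 2)
      (by linarith : ∑ k, (d k * e j k) ^ 2 < (∑ k, e j k) ^ 2) p1 p2
    linarith
  · rw [Nat.one_le_iff_ne_zero, Finset.card_ne_zero]
    by_contra hne
    have ht := hM.trace_eq_sum_eigenvalues
    have hle : ∑ i, hM.eigenvalues i ≤ 0 := by
      refine Finset.sum_nonpos fun i _ => ?_
      by_contra hc
      exact hne ⟨i, by simpa using hc⟩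
    have htr : B.trace = 1 := by
      simp [Matrix.trace, hB, Fin.sum_univ_castSucc]
    rw [htr] at ht
    simp at ht
    linarith
end

section
/- (Brunn–Minkowski inequality for brick regions.) Let A and B be brick regions in the plane. Then √(area(A + B)) ≥ √(area(A)) + √(area(B)). -/
open MeasureTheory
open scoped Pointwise

/-- A brick: an axis-parallel rectangle `[x₁, x₂] × [y₁, y₂]` with `x₁ < x₂`, `y₁ < y₂`. -/
def IsBrick (R : Set (ℝ × ℝ)) : Prop :=
  ∃ x₁ x₂ y₁ y₂ : ℝ, x₁ < x₂ ∧ y₁ < y₂ ∧ R = Set.Icc x₁ x₂ ×ˢ Set.Icc y₁ y₂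

/-- A brick region: a union of finitely many (at least one) bricks whose interiors
are pairwise disjoint. -/
def IsBrickRegion (A : Set (ℝ × ℝ)) : Prop :=
  ∃ (N : ℕ) (R : Fin N → Set (ℝ × ℝ)), 0 < N ∧ (∀ i, IsBrick (R i)) ∧
    (∀ i j, i ≠ j → interior (R i) ∩ interior (R j) = ∅) ∧ A = ⋃ i, R i

lemma bm1_compact (X Y : Set ℝ) (hX : IsCompact X) (hY : IsCompact Y) (nX : X.Nonempty)
    (nY : Y.Nonempty) : volume X + volume Y ≤ volume (X + Y) := by
  obtain ⟨m, hm, hm'⟩ := hX.exists_isGreatest nX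
  obtain ⟨l, hl, hl'⟩ := hY.exists_isLeast nY
  have h1 : volume ((fun x => x + l) '' X) = volume X := by
    simp
  have h2 : volume ((fun x => m + x) '' Y) = volume Y := by
    simp
  have hmeas : MeasurableSet ((fun x => m + x) '' Y) :=
    (hY.image (by fun_prop)).measurableSet
  have hd : AEDisjoint volume ((fun x => x + l) '' X) ((fun x => m + x) '' Y) := by
    refine measure_mono_null (t := {m + l}) ?_ (by simp)
    rintro z ⟨⟨x, hx, rfl⟩, ⟨y, hy, hxy⟩⟩
    have := hm' hx
    have := hl' hy
    simp only [Set.mem_singleton_iff] at *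
    linarith
  rw [← h1, ← h2, ← measure_union₀ hmeas.nullMeasurableSet hd]
  apply measure_mono
  rintro z (⟨x, hx, rfl⟩ | ⟨y, hy, rfl⟩)
  · exact Set.add_mem_add hx hl
  · exact Set.add_mem_add hm hy

lemma bm1 (X Y : Set ℝ) (hX : MeasurableSet X) (hY : MeasurableSet Y) (nX : X.Nonempty)
    (nY : Y.Nonempty) : volume X + volume Y ≤ volume (X + Y) := by
  obtain ⟨x0, hx0⟩ := nX
  obtain ⟨y0, hy0⟩ := nY
  rw [hX.measure_eq_iSup_isCompact, hY.measure_eq_iSup_isCompact]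
  simp only [iSup_and']
  refine ENNReal.biSup_add_biSup_le' (p := fun K => K ⊆ X ∧ IsCompact K)
    (q := fun K => K ⊆ Y ∧ IsCompact K) ⟨∅, by simp⟩ ⟨∅, by simp⟩ ?_
  rintro K ⟨hK, cK⟩ L ⟨hL, cL⟩
  calc volume K + volume L ≤ volume (insert x0 K) + volume (insert y0 L) := by
        gcongr <;> exact Set.subset_insert _ _
    _ ≤ volume (insert x0 K + insert y0 L) :=
        bm1_compact _ _ (cK.insert _) (cL.insert _) (by simp) (by simp)
    _ ≤ _ := by
        apply measure_mono
        apply Set.add_subset_add <;> apply Set.insert_subset <;> assumption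

noncomputable def slf (A : Set (ℝ × ℝ)) (x : ℝ) : ℝ := (volume (Prod.mk x ⁻¹' A)).toReal

lemma slice_compact (A : Set (ℝ × ℝ)) (hA : IsCompact A) (x : ℝ) :
    IsCompact (Prod.mk x ⁻¹' A) := by
  refine (hA.image continuous_snd).of_isClosed_subset
    (hA.isClosed.preimage (by fun_prop)) ?_
  intro y hy
  exact ⟨(x, y), hy, rfl⟩

lemma slf_bdd (A : Set (ℝ × ℝ)) (hA : IsCompact A) : BddAbove (Set.range (slf A)) := by
  refine ⟨(volume (Prod.snd '' A)).toReal, ?_⟩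
  rintro _ ⟨x, rfl⟩
  refine ENNReal.toReal_mono (hA.image continuous_snd).measure_lt_top.ne (measure_mono ?_)
  intro y hy
  exact ⟨(x, y), hy, rfl⟩

lemma slf_meas (A : Set (ℝ × ℝ)) (hA : IsCompact A) : Measurable (slf A) :=
  (measurable_measure_prodMk_left hA.measurableSet).ennreal_toReal

lemma slf_nonneg (A : Set (ℝ × ℝ)) (x : ℝ) : 0 ≤ slf A x := ENNReal.toReal_nonneg

lemma vol_eq (A : Set (ℝ × ℝ)) (hA : IsCompact A) :
    volume A = ∫⁻ x, ENNReal.ofReal (slf A x) := by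
  rw [Measure.volume_eq_prod, Measure.prod_apply hA.measurableSet]
  refine lintegral_congr fun x => ?_
  rw [slf, ENNReal.ofReal_toReal (slice_compact A hA x).measure_lt_top.ne]

lemma vol_div (A : Set (ℝ × ℝ)) (hA : IsCompact A) (c : ℝ) (hc : 0 < c) :
    volume A = ENNReal.ofReal c * ∫⁻ t in Set.Ioi (0:ℝ), volume {x | t * c < slf A x} := by
  have h := lintegral_eq_lintegral_meas_lt (volume : Measure ℝ) (f := fun x => slf A x / c)
    (Filter.Eventually.of_forall fun x => div_nonneg (slf_nonneg A x) hc.le)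
    ((slf_meas A hA).div_const c).aemeasurable
  simp only [lt_div_iff₀ hc] at h
  rw [← h, ← lintegral_const_mul _ (by have := slf_meas A hA; fun_prop), vol_eq A hA]
  refine lintegral_congr fun x => ?_
  rw [← ENNReal.ofReal_mul hc.le]
  congr 1
  field_simp

lemma slf_sup_pos (A : Set (ℝ × ℝ)) (hA : IsCompact A) (h : volume A ≠ 0) :
    0 < ⨆ x, slf A x := by
  by_contra hn
  apply h
  rw [vol_eq A hA]
  have : ∀ x, slf A x ≤ 0 := fun x => (le_ciSup (slf_bdd A hA) x).trans (not_lt.1 hn)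
  simp [ENNReal.ofReal_of_nonpos (this _)]

lemma vol_sup (A : Set (ℝ × ℝ)) (hA : IsCompact A) (h : volume A ≠ 0) :
    volume A = ENNReal.ofReal (⨆ x, slf A x) *
      ∫⁻ t in Set.Ioo (0:ℝ) 1, volume {x | t * (⨆ x, slf A x) < slf A x} := by
  have hp := slf_sup_pos A hA h
  rw [vol_div A hA _ hp]
  congr 1
  rw [← Set.Ioo_union_Ici_eq_Ioi (zero_lt_one (α := ℝ)), lintegral_union measurableSet_Ici
    (Set.disjoint_left.2 fun x hx hx' => absurd hx.2 (not_lt.2 hx')),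
    setLIntegral_eq_zero measurableSet_Ici, add_zero]
  intro t h1
  replace h1 : 1 ≤ t := h1
  show volume _ = 0
  convert measure_empty (μ := (volume : Measure ℝ))
  ext x
  simp only [Set.mem_ofPred_eq, Set.mem_empty_iff_false, iff_false, not_lt]
  have := le_ciSup (slf_bdd A hA) x
  nlinarith

lemma slf_add (A B : Set (ℝ × ℝ)) (hA : IsCompact A) (hB : IsCompact B) (x y : ℝ)
    (hx : 0 < slf A x) (hy : 0 < slf B y) : slf A x + slf B y ≤ slf (A + B) (x + y) := by
  have cA := slice_compact A hA x
  have cB := slice_compact B hB y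
  have nA : (Prod.mk x ⁻¹' A).Nonempty := by
    rw [Set.nonempty_iff_ne_empty]
    intro h
    simp [slf, h] at hx
  have nB : (Prod.mk y ⁻¹' B).Nonempty := by
    rw [Set.nonempty_iff_ne_empty]
    intro h
    simp [slf, h] at hy
  unfold slf
  rw [← ENNReal.toReal_add cA.measure_lt_top.ne cB.measure_lt_top.ne]
  refine ENNReal.toReal_mono (slice_compact _ (hA.add hB) _).measure_lt_top.ne ?_
  refine (bm1_compact _ _ cA cB nA nB).trans (measure_mono ?_)
  rintro _ ⟨u, hu, v, hv, rfl⟩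
  exact ⟨_, hu, _, hv, rfl⟩

lemma bm2 (A B : Set (ℝ × ℝ)) (hA : IsCompact A) (hB : IsCompact B) (pA : volume A ≠ 0)
    (pB : volume B ≠ 0) : Real.sqrt (volume (A + B)).toReal ≥
      Real.sqrt (volume A).toReal + Real.sqrt (volume B).toReal := by
  have ha := slf_sup_pos A hA pA
  have hb := slf_sup_pos B hB pB
  have eA := vol_sup A hA pA
  have eB := vol_sup B hB pB
  have eC := vol_div (A + B) (hA.add hB) _ (add_pos ha hb)
  have hba := slf_bdd A hA
  have hbb := slf_bdd B hB
  have fA := hA.measure_lt_top (μ := volume).ne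
  have fB := hB.measure_lt_top (μ := volume).ne
  have fC := (hA.add hB).measure_lt_top (μ := volume).ne
  set a := ⨆ x, slf A x with hadef
  set b := ⨆ x, slf B x with hbdef
  set I := ∫⁻ t in Set.Ioo (0:ℝ) 1, volume {x | t * a < slf A x}
  set J := ∫⁻ t in Set.Ioo (0:ℝ) 1, volume {x | t * b < slf B x}
  set K := ∫⁻ t in Set.Ioi (0:ℝ), volume {x | t * (a + b) < slf (A + B) x}
  have key : I + J ≤ K := by
    refine (le_lintegral_add _ _).trans ?_
    refine le_trans ?_ (lintegral_mono_set (s := Set.Ioo (0:ℝ) 1) (fun t ht => ht.1))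
    refine setLIntegral_mono' measurableSet_Ioo ?_
    rintro t ⟨ht0, ht1⟩
    refine (bm1 _ _ (measurableSet_lt measurable_const (slf_meas A hA))
      (measurableSet_lt measurable_const (slf_meas B hB)) ?_ ?_).trans (measure_mono ?_)
    · exact exists_lt_of_lt_ciSup (show t * a < ⨆ x, slf A x by nlinarith)
    · exact exists_lt_of_lt_ciSup (show t * b < ⨆ x, slf B x by nlinarith)
    · rintro _ ⟨x, hx, y, hy, rfl⟩
      simp only [Set.mem_ofPred_eq] at *
      have h1 : 0 < t * a := mul_pos ht0 ha
      have h2 : 0 < t * b := mul_pos ht0 hb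
      have := slf_add A B hA hB x y (h1.trans hx) (h2.trans hy)
      linarith
  have hK : K ≠ ⊤ := by
    intro h
    rw [h, ENNReal.mul_top (by simpa using add_pos ha hb)] at eC
    exact fC eC
  have key' : I.toReal + J.toReal ≤ K.toReal := by
    rw [← ENNReal.toReal_add (ne_top_of_le_ne_top hK (le_self_add.trans key))
      (ne_top_of_le_ne_top hK (le_add_self.trans key))]
    exact ENNReal.toReal_mono hK key
  rw [eA, eB, eC]
  simp only [ENNReal.toReal_mul, ENNReal.toReal_ofReal ha.le, ENNReal.toReal_ofReal hb.le,
    ENNReal.toReal_ofReal (add_pos ha hb).le]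
  have hI : 0 ≤ I.toReal := ENNReal.toReal_nonneg
  have hJ : 0 ≤ J.toReal := ENNReal.toReal_nonneg
  generalize I.toReal = i at *
  generalize J.toReal = j at *
  generalize K.toReal = k at *
  clear_value a b
  apply Real.le_sqrt_of_sq_le
  have h1 : (a + b) * (i + j) ≤ (a + b) * k := by gcongr
  refine le_trans ?_ h1
  have h2 : √(a * i) * √(b * j) = √(a * j) * √(b * i) := by
    rw [← Real.sqrt_mul (by positivity), ← Real.sqrt_mul (by positivity)]
    congr 1
    ring
  have s1 := Real.sq_sqrt (show 0 ≤ a * i by positivity)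
  have s2 := Real.sq_sqrt (show 0 ≤ b * j by positivity)
  have s3 := Real.sq_sqrt (show 0 ≤ a * j by positivity)
  have s4 := Real.sq_sqrt (show 0 ≤ b * i by positivity)
  nlinarith [sq_nonneg (√(a * j) - √(b * i))]

lemma brick_compact (A : Set (ℝ × ℝ)) (hA : IsBrickRegion A) : IsCompact A ∧ volume A ≠ 0 := by
  obtain ⟨N, R, hN, hR, -, rfl⟩ := hA
  constructor
  · refine isCompact_iUnion fun i => ?_
    obtain ⟨x₁, x₂, y₁, y₂, -, -, h⟩ := hR i
    rw [h]
    exact isCompact_Icc.prod isCompact_Icc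
  · intro h0
    have h1 := measure_mono_null (Set.subset_iUnion R ⟨0, hN⟩) h0
    obtain ⟨x₁, x₂, y₁, y₂, hx, hy, h⟩ := hR ⟨0, hN⟩
    rw [h, Measure.volume_eq_prod, Measure.prod_prod, Real.volume_Icc, Real.volume_Icc,
      mul_eq_zero] at h1
    simp only [ENNReal.ofReal_eq_zero] at h1
    rcases h1 with h1 | h1 <;> linarith

/-- The Brunn–Minkowski inequality for brick regions in the plane. -/
theorem stmt_16 (A B : Set (ℝ × ℝ)) (hA : IsBrickRegion A) (hB : IsBrickRegion B) :
    Real.sqrt (volume (A + B)).toReal ≥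
      Real.sqrt (volume A).toReal + Real.sqrt (volume B).toReal := by
  obtain ⟨cA, pA⟩ := brick_compact A hA
  obtain ⟨cB, pB⟩ := brick_compact B hB
  exact bm2 A B cA cB pA pB
end

section
/- Let P and Q be convex polytopes in ℝⁿ (convex hulls of nonempty finite sets), and let λ, λ', μ, μ' be positive real numbers. Then for every nonzero u ∈ ℝⁿ, the face of λP + μQ in direction u and the face of λ'P + μ'Q in direction u have the same dimension, i.e. their affine spans have equal dimension. In particular, λP + μQ and λ'P + μ'Q are strongly isomorphic. -/
open Matrix
open scoped Pointwise

/-- The face of a set `K ⊆ ℝⁿ` in direction `u`: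
`F(K, u) = {x ∈ K : ⟨u, x⟩ = sup_{y ∈ K} ⟨u, y⟩}`. -/
noncomputable def faceIn {n : ℕ} (K : Set (Fin n → ℝ)) (u : Fin n → ℝ) :
    Set (Fin n → ℝ) :=
  {x ∈ K | u ⬝ᵥ x = sSup ((fun y => u ⬝ᵥ y) '' K)}

theorem faceIn_eq_of_max {n : ℕ} {K : Set (Fin n → ℝ)} {u k : Fin n → ℝ} (hk : k ∈ K)
    (hmax : ∀ y ∈ K, u ⬝ᵥ y ≤ u ⬝ᵥ k) :
    faceIn K u = {x ∈ K | u ⬝ᵥ x = u ⬝ᵥ k} := by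
  have h : sSup ((fun y => u ⬝ᵥ y) '' K) = u ⬝ᵥ k := by
    apply IsGreatest.csSup_eq
    refine ⟨⟨k, hk, rfl⟩, ?_⟩
    rintro _ ⟨y, hy, rfl⟩
    exact hmax y hy
  unfold faceIn
  rw [h]

theorem exists_max_hull {n : ℕ} {S : Set (Fin n → ℝ)} (hS : S.Finite) (hne : S.Nonempty)
    (u : Fin n → ℝ) :
    ∃ k ∈ convexHull ℝ S, ∀ y ∈ convexHull ℝ S, u ⬝ᵥ y ≤ u ⬝ᵥ k := by
  have hc : IsCompact (convexHull ℝ S) := hS.isCompact_convexHull ℝ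
  obtain ⟨k, hk, h⟩ := hc.exists_isMaxOn (f := fun y => u ⬝ᵥ y) hne.convexHull
    (Continuous.continuousOn (by fun_prop))
  exact ⟨k, hk, fun y hy => h hy⟩

theorem faceIn_comb {n : ℕ} {P Q : Set (Fin n → ℝ)} {u p q : Fin n → ℝ} (hp : p ∈ P)
    (hq : q ∈ Q) (hpm : ∀ y ∈ P, u ⬝ᵥ y ≤ u ⬝ᵥ p) (hqm : ∀ y ∈ Q, u ⬝ᵥ y ≤ u ⬝ᵥ q)
    {a b : ℝ} (ha : 0 < a) (hb : 0 < b) :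
    faceIn (a • P + b • Q) u = a • faceIn P u + b • faceIn Q u := by
  rw [faceIn_eq_of_max hp hpm, faceIn_eq_of_max hq hqm,
    faceIn_eq_of_max (K := a • P + b • Q) (k := a • p + b • q)
      (Set.add_mem_add (Set.smul_mem_smul_set hp) (Set.smul_mem_smul_set hq))]
  · ext x
    constructor
    · rintro ⟨⟨_, ⟨y, hy, rfl⟩, _, ⟨z, hz, rfl⟩, rfl⟩, h⟩
      simp only [dotProduct_add, dotProduct_smul, smul_eq_mul] at h
      have h1 := mul_le_mul_of_nonneg_left (hpm y hy) ha.le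
      have h2 := mul_le_mul_of_nonneg_left (hqm z hz) hb.le
      refine Set.add_mem_add (Set.smul_mem_smul_set ⟨hy, ?_⟩) (Set.smul_mem_smul_set ⟨hz, ?_⟩)
      · exact mul_left_cancel₀ ha.ne' (by linarith)
      · exact mul_left_cancel₀ hb.ne' (by linarith)
    · rintro ⟨_, ⟨y, ⟨hy, hy'⟩, rfl⟩, _, ⟨z, ⟨hz, hz'⟩, rfl⟩, rfl⟩
      refine ⟨Set.add_mem_add (Set.smul_mem_smul_set hy) (Set.smul_mem_smul_set hz), ?_⟩
      simp only [dotProduct_add, dotProduct_smul, smul_eq_mul, hy', hz']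
  · rintro _ ⟨_, ⟨y, hy, rfl⟩, _, ⟨z, hz, rfl⟩, rfl⟩
    simp only [dotProduct_add, dotProduct_smul, smul_eq_mul]
    have h1 := mul_le_mul_of_nonneg_left (hpm y hy) ha.le
    have h2 := mul_le_mul_of_nonneg_left (hqm z hz) hb.le
    linarith

theorem vectorSpan_comb {n : ℕ} {A B : Set (Fin n → ℝ)} (hA : A.Nonempty) (hB : B.Nonempty)
    {a b : ℝ} (ha : 0 < a) (hb : 0 < b) :
    vectorSpan ℝ (a • A + b • B) = vectorSpan ℝ A ⊔ vectorSpan ℝ B := by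
  apply le_antisymm
  · rw [vectorSpan_def, Submodule.span_le]
    rintro _ ⟨_, ⟨_, ⟨y, hy, rfl⟩, _, ⟨z, hz, rfl⟩, rfl⟩, _,
      ⟨_, ⟨y', hy', rfl⟩, _, ⟨z', hz', rfl⟩, rfl⟩, rfl⟩
    have e : (a • y + b • z) -ᵥ (a • y' + b • z') = a • (y -ᵥ y') + b • (z -ᵥ z') := by
      simp only [vsub_eq_sub]; module
    show (a • y + b • z) -ᵥ (a • y' + b • z') ∈ _
    rw [e]
    exact Submodule.add_mem_sup (Submodule.smul_mem _ _ (vsub_mem_vectorSpan ℝ hy hy'))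
      (Submodule.smul_mem _ _ (vsub_mem_vectorSpan ℝ hz hz'))
  · obtain ⟨y0, hy0⟩ := hA
    obtain ⟨z0, hz0⟩ := hB
    have key : ∀ y ∈ A, ∀ z ∈ B, a • y + b • z ∈ a • A + b • B := fun y hy z hz =>
      Set.add_mem_add (Set.smul_mem_smul_set hy) (Set.smul_mem_smul_set hz)
    apply sup_le
    · rw [vectorSpan_def, Submodule.span_le]
      rintro _ ⟨y, hy, y', hy', rfl⟩
      have h := vsub_mem_vectorSpan ℝ (key y hy z0 hz0) (key y' hy' z0 hz0)
      have e : (a • y + b • z0) -ᵥ (a • y' + b • z0) = a • (y -ᵥ y') := by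
        simp only [vsub_eq_sub]; module
      rw [e] at h
      exact (Submodule.smul_mem_iff _ ha.ne').1 h
    · rw [vectorSpan_def, Submodule.span_le]
      rintro _ ⟨z, hz, z', hz', rfl⟩
      have h := vsub_mem_vectorSpan ℝ (key y0 hy0 z hz) (key y0 hy0 z' hz')
      have e : (a • y0 + b • z) -ᵥ (a • y0 + b • z') = b • (z -ᵥ z') := by
        simp only [vsub_eq_sub]; module
      rw [e] at h
      exact (Submodule.smul_mem_iff _ hb.ne').1 h

theorem stmt_18 {n : ℕ} (S T : Set (Fin n → ℝ))
    (hSfin : S.Finite) (hSne : S.Nonempty) (hTfin : T.Finite) (hTne : T.Nonempty)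
    (lam lam' mu mu' : ℝ)
    (hlam : 0 < lam) (hlam' : 0 < lam') (hmu : 0 < mu) (hmu' : 0 < mu') :
    ∀ u : Fin n → ℝ, u ≠ 0 →
      Module.finrank ℝ
        (affineSpan ℝ (faceIn (lam • convexHull ℝ S + mu • convexHull ℝ T) u)).direction =
      Module.finrank ℝ
        (affineSpan ℝ (faceIn (lam' • convexHull ℝ S + mu' • convexHull ℝ T) u)).direction := by
  intro u _
  obtain ⟨p, hp, hpm⟩ := exists_max_hull hSfin hSne u
  obtain ⟨q, hq, hqm⟩ := exists_max_hull hTfin hTne u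
  have hA : (faceIn (convexHull ℝ S) u).Nonempty :=
    ⟨p, by rw [faceIn_eq_of_max hp hpm]; exact ⟨hp, rfl⟩⟩
  have hB : (faceIn (convexHull ℝ T) u).Nonempty :=
    ⟨q, by rw [faceIn_eq_of_max hq hqm]; exact ⟨hq, rfl⟩⟩
  rw [direction_affineSpan, direction_affineSpan, faceIn_comb hp hq hpm hqm hlam hmu,
    faceIn_comb hp hq hpm hqm hlam' hmu', vectorSpan_comb hA hB hlam hmu,
    vectorSpan_comb hA hB hlam' hmu']
end
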